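/- Let n ≥ 1 and let K be a smooth, strictly convex body in ℝ^{n+1} with positive support function. If h(x)·det(A(x) + x⊗x) = 1 for every x ∈ S^n (equivalently, the Gauss curvature satisfies 𝒦 = h), then K is the closed unit ball; equivalently h_K(z) = ‖z‖ for all z ∈ ℝ^{n+1}. -/

import Mathlib

open MeasureTheory Metric Real
open scoped InnerProductSpace ENNReal Topology

noncomputable section

/-- Euclidean space `ℝ^{n+1}`. -/
abbrev Eu (n : ℕ) : Type := EuclideanSpace ℝ (Fin (n + 1))

/-- The unit sphere `S^n ⊆ ℝ^{n+1}` as a subtype. -/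
abbrev Sph (n : ℕ) : Type := Metric.sphere (0 : Eu n) 1

/-- The spherical Lebesgue (surface) measure on `S^n`. -/
def sphMeas (n : ℕ) : Measure (Sph n) := (volume : Measure (Eu n)).toSphere

/-- The support function of a set `K ⊆ ℝ^{n+1}`. -/
def sfn {n : ℕ} (K : Set (Eu n)) (z : Eu n) : ℝ :=
  sSup ((fun y => ⟪z, y⟫_ℝ) '' K)

/-- The Hessian endomorphism `A(x) = D(∇ h_K)(x)`. -/
def hessA {n : ℕ} (K : Set (Eu n)) (x : Eu n) : Eu n →L[ℝ] Eu n :=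
  fderiv ℝ (gradient (sfn K)) x

/-- The rank-one endomorphism `x ⊗ x : v ↦ ⟨v, x⟩ x`. -/
def tens {n : ℕ} (x : Eu n) : Eu n →L[ℝ] Eu n :=
  (innerSL ℝ x).smulRight x

/-- `det (A(x) + x ⊗ x)`, the reciprocal Gauss curvature `1/𝒦` at `x ∈ S^n`. -/
def rK {n : ℕ} (K : Set (Eu n)) (x : Eu n) : ℝ :=
  LinearMap.det ((hessA K x + tens x : Eu n →L[ℝ] Eu n) : Eu n →ₗ[ℝ] Eu n)

/-- `K` is a smooth, strictly convex body with positive support function. -/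
structure IsSmoothConvexBody {n : ℕ} (K : Set (Eu n)) : Prop where
  compact : IsCompact K
  convex : Convex ℝ K
  interior_nonempty : (interior K).Nonempty
  pos : ∀ x : Sph n, 0 < sfn K x
  smooth : ContDiffOn ℝ (⊤ : ℕ∞) (sfn K) {(0 : Eu n)}ᶜ
  posdef : ∀ x : Sph n, ∀ v : Eu n, v ≠ 0 →
    0 < ⟪(hessA K (x : Eu n) + tens (x : Eu n)) v, v⟫_ℝ

/-- The density `h·det(A + x⊗x)` of the measure `dV` with respect to `dθ`. -/
def dens {n : ℕ} (K : Set (Eu n)) (x : Eu n) : ℝ := sfn K x * rK K x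

/-- The centroid-type point `c(K) = (∫ ∇h_K dV)/(∫ dV)`. -/
def cK {n : ℕ} (K : Set (Eu n)) : Eu n :=
  (∫ x : Sph n, dens K x ∂sphMeas n)⁻¹ •
    ∫ x : Sph n, dens K x • gradient (sfn K) x ∂sphMeas n

/-- The support function of the translated body `K - c(K)`. -/
def tsfn {n : ℕ} (K : Set (Eu n)) (x : Eu n) : ℝ := sfn K x - ⟪x, cK K⟫_ℝ

/-!
The function `z ↦ ‖z‖ ∇h(z)` maps the unit ball to `K`, with Jacobian `dens K` on the sphere. Deform
`K` along it with the radial functions `1 ± t (⟪v, ∇h⟫ - c)`, where `c` is the mean of `⟪v, ∇h⟫` for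
`dV = h det(A + x ⊗ x) dθ`: midpoints of the two deformed bodies deviate from `K` only to second
order in `t`, so comparing the `t²`-coefficients in the Brunn–Minkowski inequality gives
`n ∫ (⟪v, ∇h⟫ - c)² dV ≤ ∫ h ⟪A v, v⟫ dV`.

If `h det(A + x ⊗ x) = 1` then `dV = dθ`. Summing over an orthonormal basis of vectors `v` and
integrating by parts on the sphere yields `∫ ‖∇h - c(K)‖² dθ ≤ ∫ (h - ⟪x, c(K)⟫)² dθ`. But
`h - ⟪x, c(K)⟫` is the component of `∇h - c(K)` along `x`, so `∇h - c(K)` is radial and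
`h = c + ⟪x, c(K)⟫` on the sphere for some constant `c > 0`. For such a ball
`det(A + x ⊗ x) = c ^ n`, so `h` is the constant `c ^ (-n)`, whence `h = 1`.
-/

/-! ### The Prékopa–Leindler inequality -/

theorem two_mul_volume_image_midpoint (a : ℝ) (A : Set ℝ) :
    2 * volume (midpoint ℝ a '' A) = volume A := by
  have : midpoint ℝ a = AffineMap.homothety a (2⁻¹ : ℝ) := by
    ext b
    exact (homothety_inv_two a b).symm
  rw [this, Measure.addHaar_image_homothety]
  simp [← mul_assoc, ENNReal.mul_inv_cancel]

-- The halves `midpoint (min B) A` and `midpoint (max A) B` of `M` lie side by side.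
theorem volume_add_volume_le_of_isCompact {A B M : Set ℝ} (hA : IsCompact A) (hB : IsCompact B)
    (hA' : A.Nonempty) (hB' : B.Nonempty) (hM : ∀ a ∈ A, ∀ b ∈ B, midpoint ℝ a b ∈ M) :
    volume A + volume B ≤ 2 * volume M := by
  obtain ⟨a, ha, hA_le⟩ := hA.exists_isGreatest hA'
  obtain ⟨b, hb, hB_ge⟩ := hB.exists_isLeast hB'
  have hinter : volume (midpoint ℝ b '' A ∩ midpoint ℝ a '' B) = 0 := by
    refine measure_mono_null (t := {midpoint ℝ a b}) ?_ (by simp)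
    rintro _ ⟨⟨x, hx, rfl⟩, y, hy, hxy⟩
    have hxa := hA_le hx
    have hby := hB_ge hy
    simp only [midpoint_eq_smul_add, smul_eq_mul, invOf_eq_inv, Set.mem_singleton_iff] at hxy ⊢
    linarith
  have hmeas : MeasurableSet (midpoint ℝ a '' B) :=
    (hB.image (by unfold midpoint; fun_prop)).measurableSet
  calc
    volume A + volume B = 2 * volume (midpoint ℝ b '' A ∪ midpoint ℝ a '' B) := by
      rw [← add_zero (volume (_ ∪ _)), ← hinter, measure_union_add_inter _ hmeas, mul_add,
        two_mul_volume_image_midpoint, two_mul_volume_image_midpoint]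
    _ ≤ 2 * volume M := by
      gcongr
      rintro _ (⟨x, hx, rfl⟩ | ⟨y, hy, rfl⟩)
      · exact midpoint_comm (R := ℝ) x b ▸ hM x hx b hb
      · exact hM a ha y hy

theorem volume_add_volume_le_two_mul_volume {A B M : Set ℝ} (hA : MeasurableSet A)
    (hB : MeasurableSet B) (hA' : A.Nonempty) (hB' : B.Nonempty)
    (hM : ∀ a ∈ A, ∀ b ∈ B, midpoint ℝ a b ∈ M) : volume A + volume B ≤ 2 * volume M := by
  obtain ⟨a, ha⟩ := hA'
  obtain ⟨b, hb⟩ := hB'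
  rw [hA.measure_eq_iSup_isCompact, hB.measure_eq_iSup_isCompact]
  simp only [iSup_and']
  refine ENNReal.biSup_add_biSup_le' (p := fun C => C ⊆ A ∧ IsCompact C)
    (q := fun C => C ⊆ B ∧ IsCompact C) ⟨∅, by simp⟩ ⟨∅, by simp⟩ fun C hC D hD => ?_
  calc
    volume C + volume D ≤ volume (insert a C) + volume (insert b D) := by
      gcongr <;> exact Set.subset_insert _ _
    _ ≤ 2 * volume M :=
      volume_add_volume_le_of_isCompact (hC.2.insert a) (hD.2.insert b)
        (Set.insert_nonempty _ _) (Set.insert_nonempty _ _) fun x hx y hy =>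
          hM x (Set.insert_subset ha hC.1 hx) y (Set.insert_subset hb hD.1 hy)

theorem mul_le_sq_of_add_le_two_mul {a b c : ℝ≥0∞} (h : a + b ≤ 2 * c) :
    a * b ≤ c ^ 2 := by
  obtain rfl | hc := eq_or_ne c ∞
  · simp
  have hab : a + b ≠ ∞ := ne_top_of_le_ne_top (ENNReal.mul_ne_top (by simp) hc) h
  lift c to NNReal using hc
  lift a to NNReal using (ENNReal.add_ne_top.1 hab).1
  lift b to NNReal using (ENNReal.add_ne_top.1 hab).2
  norm_cast at h ⊢
  have h' : (a : ℝ) + b ≤ 2 * c := mod_cast h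
  have : (a : ℝ) * b ≤ c ^ 2 := by
    nlinarith [h', sq_nonneg ((a : ℝ) - b), a.coe_nonneg, b.coe_nonneg, c.coe_nonneg]
  exact_mod_cast this

theorem measurable_volume_setOf_lt (u : ℝ → ℝ) : Measurable fun t => volume {x | t < u x} :=
  Antitone.measurable fun _ _ hst => measure_mono fun _ hx => lt_of_le_of_lt hst hx

theorem lintegral_add_lintegral_le_of_isLUB_one {f g m : ℝ → ℝ} (hf : Measurable f)
    (hg : Measurable g) (hm : Measurable m) (hf0 : 0 ≤ f) (hg0 : 0 ≤ g) (hm0 : 0 ≤ m)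
    (hf1 : IsLUB (Set.range f) 1) (hg1 : IsLUB (Set.range g) 1)
    (h : ∀ x y, f x * g y ≤ m (midpoint ℝ x y) ^ 2) :
    (∫⁻ x, .ofReal (f x)) + ∫⁻ x, .ofReal (g x) ≤ 2 * ∫⁻ x, .ofReal (m x) := by
  rw [lintegral_eq_lintegral_meas_lt _ (ae_of_all _ hf0) hf.aemeasurable,
    lintegral_eq_lintegral_meas_lt _ (ae_of_all _ hg0) hg.aemeasurable,
    lintegral_eq_lintegral_meas_lt _ (ae_of_all _ hm0) hm.aemeasurable,
    ← lintegral_add_left (measurable_volume_setOf_lt f),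
    ← lintegral_const_mul _ (measurable_volume_setOf_lt m)]
  refine setLIntegral_mono ((measurable_volume_setOf_lt m).const_mul _) fun t (ht : 0 < t) => ?_
  obtain ht1 | ht1 := lt_or_ge t 1
  · refine volume_add_volume_le_two_mul_volume (measurableSet_lt measurable_const hf)
      (measurableSet_lt measurable_const hg) ?_ ?_ fun x (hx : t < f x) y (hy : t < g y) => ?_
    · obtain ⟨_, ⟨x, rfl⟩, hx, -⟩ := hf1.exists_between ht1
      exact ⟨x, hx⟩
    · obtain ⟨_, ⟨y, rfl⟩, hy, -⟩ := hg1.exists_between ht1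
      exact ⟨y, hy⟩
    · refine lt_of_pow_lt_pow_left₀ 2 (hm0 _) ?_
      calc t ^ 2 = t * t := sq t
        _ < f x * g y := mul_lt_mul'' hx hy ht.le ht.le
        _ ≤ m (midpoint ℝ x y) ^ 2 := h x y
  · have hempty {u : ℝ → ℝ} (hu : IsLUB (Set.range u) 1) : {x | t < u x} = ∅ :=
      Set.eq_empty_of_forall_notMem fun x => not_lt.2 ((hu.1 ⟨x, rfl⟩).trans ht1)
    simp [hempty hf1, hempty hg1]

theorem isLUB_range_div_iSup {f : ℝ → ℝ} (hf : BddAbove (Set.range f)) (h : 0 < ⨆ x, f x) :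
    IsLUB (Set.range fun x => f x / ⨆ x, f x) 1 := by
  have := (isLUB_ciSup hf).mul_right (inv_nonneg.2 h.le)
  rwa [← Set.range_comp, mul_inv_cancel₀ h.ne'] at this

theorem lintegral_ofReal_eq_mul_lintegral_div {X : Type*} [MeasurableSpace X] {μ : Measure X}
    (u : X → ℝ) {c : ℝ} (hc : 0 < c) :
    ∫⁻ x, .ofReal (u x) ∂μ = .ofReal c * ∫⁻ x, .ofReal (u x / c) ∂μ := by
  rw [← lintegral_const_mul' _ _ ENNReal.ofReal_ne_top]
  simp only [← ENNReal.ofReal_mul hc.le, mul_div_cancel₀ _ hc.ne']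

theorem lintegral_mul_lintegral_le_of_bddAbove {f g m : ℝ → ℝ} (hf : Measurable f)
    (hg : Measurable g) (hm : Measurable m) (hf0 : 0 ≤ f) (hg0 : 0 ≤ g) (hm0 : 0 ≤ m)
    (hf1 : BddAbove (Set.range f)) (hg1 : BddAbove (Set.range g))
    (h : ∀ x y, f x * g y ≤ m (midpoint ℝ x y) ^ 2) :
    (∫⁻ x, .ofReal (f x)) * (∫⁻ x, .ofReal (g x)) ≤ (∫⁻ x, .ofReal (m x)) ^ 2 := by
  set a := ⨆ x, f x
  set b := ⨆ x, g x
  obtain ha | ha := (Real.iSup_nonneg hf0).eq_or_lt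
  · simp [ENNReal.ofReal_eq_zero.2 ((le_ciSup hf1 _).trans_eq ha.symm)]
  obtain hb | hb := (Real.iSup_nonneg hg0).eq_or_lt
  · simp [ENNReal.ofReal_eq_zero.2 ((le_ciSup hg1 _).trans_eq hb.symm)]
  have hab : 0 < √(a * b) := Real.sqrt_pos.2 (mul_pos ha hb)
  have hab2 : √(a * b) ^ 2 = a * b := Real.sq_sqrt (mul_pos ha hb).le
  have hnorm : (∫⁻ x, .ofReal (f x / a)) * (∫⁻ x, .ofReal (g x / b)) ≤
      (∫⁻ x, .ofReal (m x / √(a * b))) ^ 2 := by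
    refine mul_le_sq_of_add_le_two_mul (lintegral_add_lintegral_le_of_isLUB_one
      (hf.div_const a) (hg.div_const b) (hm.div_const _) (fun x => div_nonneg (hf0 x) ha.le)
      (fun x => div_nonneg (hg0 x) hb.le) (fun x => div_nonneg (hm0 x) hab.le)
      (isLUB_range_div_iSup hf1 ha) (isLUB_range_div_iSup hg1 hb) fun x y => ?_)
    rw [div_pow, hab2, div_mul_div_comm]
    gcongr
    exact h x y
  rw [lintegral_ofReal_eq_mul_lintegral_div f ha, lintegral_ofReal_eq_mul_lintegral_div g hb,
    lintegral_ofReal_eq_mul_lintegral_div m hab, mul_mul_mul_comm, mul_pow,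
    ← ENNReal.ofReal_mul ha.le, ← ENNReal.ofReal_pow hab.le, hab2]
  gcongr

/-- The Prékopa–Leindler inequality for midpoints, as a property of a measure. It is squared
so that no square roots of `ℝ≥0∞`-valued functions occur. -/
def PrekopaLeindler {V : Type*} [AddCommGroup V] [Module ℝ V] [MeasurableSpace V]
    (μ : Measure V) : Prop :=
  ∀ ⦃f g m : V → ℝ≥0∞⦄, Measurable f → Measurable g → Measurable m →
    (∀ x y, f x * g y ≤ m (midpoint ℝ x y) ^ 2) →
      (∫⁻ x, f x ∂μ) * (∫⁻ x, g x ∂μ) ≤ (∫⁻ x, m x ∂μ) ^ 2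

theorem tendsto_lintegral_min_natCast {X : Type*} [MeasurableSpace X] {μ : Measure X}
    {u : X → ℝ≥0∞} (hu : Measurable u) :
    Filter.Tendsto (fun k : ℕ => ∫⁻ x, min (u x) k ∂μ) Filter.atTop (𝓝 (∫⁻ x, u x ∂μ)) := by
  refine lintegral_tendsto_of_tendsto_of_monotone (fun k => (hu.min measurable_const).aemeasurable)
    (ae_of_all _ fun x i j hij => min_le_min_left _ (mod_cast hij)) (ae_of_all _ fun x => ?_)
  simpa using tendsto_const_nhds.min ENNReal.tendsto_nat_nhds_top

theorem min_mul_min_le_min_sq {a b c k : ℝ≥0∞} (h : a * b ≤ c ^ 2) :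
    min a k * min b k ≤ min c k ^ 2 := by
  obtain hc | hc := le_total c k
  · rw [min_eq_left hc]
    exact (mul_le_mul' (min_le_left _ _) (min_le_left _ _)).trans h
  · rw [min_eq_right hc, sq]
    exact mul_le_mul' (min_le_right _ _) (min_le_right _ _)

theorem prekopaLeindler_real : PrekopaLeindler (volume : Measure ℝ) := by
  intro f g m hf hg hm h
  have hfin (u : ℝ → ℝ≥0∞) (k : ℕ) (x : ℝ) : min (u x) k ≠ ∞ :=
    ne_top_of_le_ne_top (by simp) (min_le_right _ _)
  have hbdd (u : ℝ → ℝ≥0∞) (k : ℕ) : BddAbove (Set.range fun x => (min (u x) k).toReal) := by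
    refine ⟨k, ?_⟩
    rintro _ ⟨x, rfl⟩
    simpa using ENNReal.toReal_mono (by simp) (min_le_right (u x) k)
  have htrunc (k : ℕ) : (∫⁻ x, min (f x) k) * (∫⁻ x, min (g x) k) ≤ (∫⁻ x, m x) ^ 2 := by
    have := lintegral_mul_lintegral_le_of_bddAbove
      (hf.min measurable_const).ennreal_toReal (hg.min measurable_const).ennreal_toReal
      (hm.min measurable_const).ennreal_toReal (fun _ => ENNReal.toReal_nonneg)
      (fun _ => ENNReal.toReal_nonneg) (fun _ => ENNReal.toReal_nonneg) (hbdd f k) (hbdd g k)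
      fun x y => by
        rw [← ENNReal.toReal_mul, ← ENNReal.toReal_pow]
        exact ENNReal.toReal_mono (ENNReal.pow_ne_top (hfin m k _))
          (min_mul_min_le_min_sq (h x y))
    simp only [ENNReal.ofReal_toReal (hfin _ k _)] at this
    refine this.trans ?_
    gcongr
    exact min_le_left _ _
  obtain hf0 | hf0 := eq_or_ne (∫⁻ x, f x) 0
  · simp [hf0]
  obtain hg0 | hg0 := eq_or_ne (∫⁻ x, g x) 0
  · simp [hg0]
  exact le_of_tendsto' (ENNReal.Tendsto.mul (tendsto_lintegral_min_natCast hf) (.inl hf0)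
    (tendsto_lintegral_min_natCast hg) (.inl hg0)) htrunc

namespace PrekopaLeindler

variable {V W : Type*} [AddCommGroup V] [Module ℝ V] [MeasurableSpace V] {μ : Measure V}
  [AddCommGroup W] [Module ℝ W] [MeasurableSpace W] {ν : Measure W}

theorem prod [SFinite ν] (hμ : PrekopaLeindler μ) (hν : PrekopaLeindler ν) :
    PrekopaLeindler (μ.prod ν) := by
  intro f g m hf hg hm h
  rw [lintegral_prod _ hf.aemeasurable, lintegral_prod _ hg.aemeasurable,
    lintegral_prod _ hm.aemeasurable]
  refine hμ hf.lintegral_prod_right' hg.lintegral_prod_right' hm.lintegral_prod_right' fun x y => ?_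
  exact hν (by fun_prop) (by fun_prop) (by fun_prop) fun x' y' => h (x, x') (y, y')

theorem of_measurePreserving {e : W → V} (hν : PrekopaLeindler ν) (he : MeasurePreserving e ν μ)
    (he' : ∀ x y, e (midpoint ℝ x y) = midpoint ℝ (e x) (e y)) : PrekopaLeindler μ := by
  intro f g m hf hg hm h
  rw [← he.lintegral_comp hf, ← he.lintegral_comp hg, ← he.lintegral_comp hm]
  exact hν (hf.comp he.measurable) (hg.comp he.measurable) (hm.comp he.measurable)
    fun x y => (he' x y).symm ▸ h (e x) (e y)

theorem measure_mul_measure_le (hμ : PrekopaLeindler μ) {A B M : Set V} (hA : MeasurableSet A)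
    (hB : MeasurableSet B) (hM : ∀ a ∈ A, ∀ b ∈ B, midpoint ℝ a b ∈ M) :
    μ A * μ B ≤ μ M ^ 2 := by
  have hM' := measurableSet_toMeasurable μ M
  have := hμ (measurable_one.indicator hA) (measurable_one.indicator hB)
    (measurable_one.indicator hM') fun x y => by
      by_cases hx : x ∈ A
      · by_cases hy : y ∈ B
        · simp [hx, hy, subset_toMeasurable μ M (hM x hx y hy)]
        · simp [hy]
      · simp [hx]
  simpa [lintegral_indicator_one, hA, hB, hM'] using this

end PrekopaLeindler

theorem prekopaLeindler_pi (N : ℕ) : PrekopaLeindler (volume : Measure (Fin N → ℝ)) := by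
  induction N with
  | zero =>
    intro f g m _ _ _ h
    simp only [lintegral_unique, volume_pi, Measure.pi_univ, Finset.univ_eq_empty,
      Finset.prod_empty, mul_one]
    exact (h _ _).trans_eq (congrArg (m · ^ 2) (Subsingleton.elim _ _))
  | succ N ih =>
    refine (prekopaLeindler_real.prod ih).of_measurePreserving
      (volume_preserving_piFinSuccAbove (fun _ : Fin (N + 1) => ℝ) 0).symm ?_
    rintro ⟨x, x'⟩ ⟨y, y'⟩
    ext i
    refine Fin.cases ?_ (fun j => ?_) i <;>
      simp [MeasurableEquiv.piFinSuccAbove, midpoint_eq_smul_add, mul_add]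

section InnerProductSpace

variable (E : Type*) [NormedAddCommGroup E] [InnerProductSpace ℝ E] [FiniteDimensional ℝ E]
  [MeasurableSpace E] [BorelSpace E]

theorem prekopaLeindler_volume : PrekopaLeindler (volume : Measure E) := by
  let e := (stdOrthonormalBasis ℝ E).repr.symm
  refine (prekopaLeindler_pi _).of_measurePreserving
    ((e.measurePreserving).comp (PiLp.volume_preserving_toLp _)) fun x y => ?_
  simp [midpoint_eq_smul_add]

end InnerProductSpace

/-! ### Polar coordinates -/

section Polar

variable {E : Type*} [NormedAddCommGroup E] [InnerProductSpace ℝ E] [FiniteDimensional ℝ E]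
  [MeasurableSpace E] [BorelSpace E]

variable (E) in
/-- Polar coordinates `(x, r) ↦ r • x` on the punctured space. -/
def polarMap (p : sphere (0 : E) 1 × Set.Ioi (0 : ℝ)) : E := (p.2 : ℝ) • (p.1 : E)

/-- The star-shaped region `{r x | ‖x‖ = 1, 0 < r < ρ x}` of radial function `ρ`, without its
centre. -/
def starRegion (ρ : sphere (0 : E) 1 → ℝ) : Set E := polarMap E '' {p | p.2 < ρ p.1}

variable (E) in
theorem measurableEmbedding_polarMap : MeasurableEmbedding (polarMap E) :=
  (MeasurableEmbedding.subtype_coe (measurableSet_singleton (0 : E)).compl).comp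
    (homeomorphUnitSphereProd E).symm.measurableEmbedding

theorem measurePreserving_polarMap [Nontrivial E] (μ : Measure E) [μ.IsAddHaarMeasure] :
    MeasurePreserving (polarMap E)
      (μ.toSphere.prod (Measure.volumeIoiPow (Module.finrank ℝ E - 1))) μ := by
  have hcoe := measurePreserving_subtype_coe (μa := μ) (measurableSet_singleton (0 : E)).compl
  rw [restrict_compl_singleton] at hcoe
  exact hcoe.comp (μ.measurePreserving_homeomorphUnitSphereProd.symm
    (homeomorphUnitSphereProd E).toMeasurableEquiv)

omit [FiniteDimensional ℝ E] [MeasurableSpace E] [BorelSpace E] in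
theorem starRegion_subset_compl_zero (ρ : sphere (0 : E) 1 → ℝ) : starRegion ρ ⊆ {0}ᶜ := by
  rintro _ ⟨⟨x, r⟩, -, rfl⟩
  exact smul_ne_zero r.2.ne' (ne_zero_of_mem_unit_sphere x)

theorem measurableSet_starRegion {ρ : sphere (0 : E) 1 → ℝ} (hρ : Measurable ρ) :
    MeasurableSet (starRegion ρ) :=
  (measurableEmbedding_polarMap E).measurableSet_image'
    (measurableSet_lt (by fun_prop) (by fun_prop))

theorem setLIntegral_starRegion [Nontrivial E] (μ : Measure E) [μ.IsAddHaarMeasure]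
    {ρ : sphere (0 : E) 1 → ℝ} (hρ : Measurable ρ) (hρ0 : ∀ x, 0 < ρ x) {g : E → ℝ≥0∞}
    (hg : Measurable g) (hg' : ∀ r : ℝ, 0 < r → ∀ z, g (r • z) = g z) :
    ∫⁻ z in starRegion ρ, g z ∂μ = ∫⁻ x, g x *
      .ofReal (ρ x ^ Module.finrank ℝ E / Module.finrank ℝ E) ∂μ.toSphere := by
  have hdim : Module.finrank ℝ E - 1 + 1 = Module.finrank ℝ E :=
    Nat.sub_add_cancel Module.finrank_pos
  have hdim' : ((Module.finrank ℝ E - 1 : ℕ) : ℝ) + 1 = Module.finrank ℝ E := mod_cast hdim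
  have hT : MeasurableSet {p : sphere (0 : E) 1 × Set.Ioi (0 : ℝ) | p.2 < ρ p.1} :=
    measurableSet_lt (by fun_prop) (by fun_prop)
  have hg_polar : Measurable fun p => g (polarMap E p) :=
    hg.comp (measurableEmbedding_polarMap E).measurable
  have hpre : polarMap E ⁻¹' starRegion ρ = {p | p.2 < ρ p.1} :=
    (measurableEmbedding_polarMap E).injective.preimage_image _
  rw [← (measurePreserving_polarMap μ).setLIntegral_comp_preimage_emb
    (measurableEmbedding_polarMap E), hpre, ← lintegral_indicator hT,
    lintegral_prod _ (hg_polar.indicator hT).aemeasurable]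
  refine lintegral_congr fun x => ?_
  have hslice : (fun r => {p | p.2 < ρ p.1}.indicator (fun p => g (polarMap E p)) (x, r)) =
      (Set.Iio ⟨ρ x, hρ0 x⟩).indicator fun _ => g x := by
    ext r
    simp only [Set.indicator, Set.mem_ofPred_eq, Set.mem_Iio, ← Subtype.coe_lt_coe, polarMap,
      hg' r r.2]
  rw [hslice, lintegral_indicator_const measurableSet_Iio, Measure.volumeIoiPow_apply_Iio, hdim,
    hdim']

theorem integral_fun_norm_mul_of_smul_eq [Nontrivial E] (μ : Measure E) [μ.IsAddHaarMeasure]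
    (β : ℝ → ℝ) {g : E → ℝ} (hg : ∀ r : ℝ, 0 < r → ∀ z, g (r • z) = g z) :
    ∫ z, β ‖z‖ * g z ∂μ =
      (∫ r : Set.Ioi (0 : ℝ), β r ∂Measure.volumeIoiPow (Module.finrank ℝ E - 1)) *
        ∫ x : sphere (0 : E) 1, g x ∂μ.toSphere := by
  rw [← (measurePreserving_polarMap μ).integral_comp (measurableEmbedding_polarMap E), mul_comm,
    ← integral_prod_mul]
  refine integral_congr_ae (ae_of_all _ fun p => ?_)
  have hr : (0 : ℝ) < p.2 := p.2.2
  simp [polarMap, norm_smul, abs_of_pos hr, hg _ hr, mul_comm]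

end Polar

/-! ### The divergence theorem on the sphere -/

section Homogeneous

variable {E F : Type*} [NormedAddCommGroup E] [NormedSpace ℝ E] [NormedAddCommGroup F]
  [NormedSpace ℝ F]

theorem smul_fderiv_smul_of_map_smul {u : E → F} {r a : ℝ} (h : ∀ z, u (r • z) = a • u z)
    (z : E) : r • fderiv ℝ u (r • z) = a • fderiv ℝ u z := by
  rw [← fderiv_comp_smul, funext h]
  exact congrFun (fderiv_const_smul_field a) z

theorem hasFDerivAt_apply_self_of_homogeneous {u : E → F} {L : E →L[ℝ] F} {z : E} {k : ℕ}
    (hL : HasFDerivAt u L z) (h : ∀ r : ℝ, 0 < r → u (r • z) = r ^ k • u z) :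
    L z = (k : ℝ) • u z := by
  have hray : HasDerivAt (fun r : ℝ => u (r • z)) (L z) 1 := by
    refine HasFDerivAt.comp_hasDerivAt (1 : ℝ) (l := u) (l' := L) (f := (· • z)) ?_ ?_
    · rwa [one_smul]
    · simpa using (hasDerivAt_id (1 : ℝ)).smul_const z
  have hpow : HasDerivAt (fun r : ℝ => u (r • z)) ((k : ℝ) • u z) 1 := by
    refine HasDerivAt.congr_of_eventuallyEq (f := fun r : ℝ => r ^ k • u z) ?_
      ((lt_mem_nhds one_pos).mono h)
    simpa using (hasDerivAt_pow k (1 : ℝ)).smul_const (u z)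
  exact hray.unique hpow

end Homogeneous

section SphereIntegration

variable {E : Type*} [NormedAddCommGroup E] [InnerProductSpace ℝ E]

theorem contDiff_radial_mul {η : ℝ → ℝ} {u : E → ℝ} {k : WithTop ℕ∞} (hη : ContDiff ℝ k η)
    (hη0 : ∀ s < 1, η s = 0) (hu : ContDiffOn ℝ k u {0}ᶜ) :
    ContDiff ℝ k fun z => η (‖z‖ ^ 2) * u z := by
  rw [contDiff_iff_contDiffAt]
  intro z
  obtain rfl | hz := eq_or_ne z 0
  · refine contDiffAt_const (c := 0) |>.congr_of_eventuallyEq ?_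
    filter_upwards [ball_mem_nhds (0 : E) one_pos] with w hw
    rw [hη0 _ (pow_lt_one₀ (norm_nonneg w) (mem_ball_zero_iff.1 hw) two_ne_zero), zero_mul]
  · exact (hη.comp (contDiff_norm_sq ℝ)).contDiffAt.mul
      (hu.contDiffAt (isOpen_compl_singleton.mem_nhds hz))

theorem fderiv_radial_mul_apply {η : ℝ → ℝ} {u : E → ℝ} {z : E} (hη : Differentiable ℝ η)
    (hu : DifferentiableAt ℝ u z) (v : E) : fderiv ℝ (fun z => η (‖z‖ ^ 2) * u z) z v =
      η (‖z‖ ^ 2) * fderiv ℝ u z v + 2 * deriv η (‖z‖ ^ 2) * (⟪z, v⟫_ℝ * u z) := by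
  have hη' : HasFDerivAt (fun z : E => η (‖z‖ ^ 2)) (deriv η (‖z‖ ^ 2) • (2 • innerSL ℝ z)) z :=
    (hη _).hasDerivAt.comp_hasFDerivAt z (hasStrictFDerivAt_norm_sq z).hasFDerivAt
  rw [(hη'.fun_mul hu.hasFDerivAt).fderiv]
  simp only [add_apply, smul_apply, innerSL_apply_apply, smul_eq_mul, nsmul_eq_mul, Nat.cast_ofNat]
  ring

variable [FiniteDimensional ℝ E]

theorem hasCompactSupport_radial {η : ℝ → ℝ} (hη : ∀ s, 3 ≤ s → η s = 0) :
    HasCompactSupport fun z : E => η (‖z‖ ^ 2) := by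
  refine HasCompactSupport.of_support_subset_isCompact (isCompact_closedBall (0 : E) 2) ?_
  intro z hz
  rw [mem_closedBall_zero_iff]
  contrapose! hz
  exact Function.notMem_support.2 (hη _ (by nlinarith))

variable [MeasurableSpace E] [BorelSpace E]

theorem integral_fderiv_apply_eq_zero (μ : Measure E) [μ.IsAddHaarMeasure] {w : E → ℝ}
    (hw : ContDiff ℝ 1 w) (hw' : HasCompactSupport w) (v : E) : ∫ z, fderiv ℝ w z v ∂μ = 0 := by
  have hcont : Continuous fun z => fderiv ℝ w z v :=
    (hw.continuous_fderiv one_ne_zero).clm_apply continuous_const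
  simpa using integral_mul_fderiv_eq_neg_fderiv_mul_of_integrable (μ := μ)
    (f := fun _ => (1 : ℝ)) (g := w) (v := v) (by simp)
    (by simpa using hcont.integrable_of_hasCompactSupport (hw'.fderiv_apply ℝ v))
    (by simpa using hw.continuous.integrable_of_hasCompactSupport hw') (by simp)
    fun z _ => hw.differentiable one_ne_zero z

theorem exists_cutoff : ∃ η : ℝ → ℝ, ContDiff ℝ 1 η ∧ (∀ s, 0 ≤ η s) ∧ η 2 ≠ 0 ∧
    (∀ s < 1, η s = 0) ∧ ∀ s, 3 ≤ s → η s = 0 := by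
  let η : ContDiffBump (2 : ℝ) := ⟨1 / 2, 1, by norm_num, by norm_num⟩
  have hη (s : ℝ) (hs : 1 ≤ |s - 2|) : η s = 0 := η.zero_of_le_dist hs
  refine ⟨η, η.contDiff, fun s => η.nonneg, (η.pos_of_mem_ball ?_).ne', fun s hs => hη s ?_,
    fun s hs => hη s ?_⟩
  · exact mem_ball_self η.rOut_pos
  · exact le_abs.2 (.inr (by linarith))
  · exact le_abs.2 (.inl (by linarith))

theorem integral_volumeIoiPow_sq_pos [Nontrivial E] {η : ℝ → ℝ} (hη : Continuous η)
    (hη0 : ∀ s, 0 ≤ η s) (hη2 : η 2 ≠ 0) (hη3 : ∀ s, 3 ≤ s → η s = 0) :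
    0 < ∫ r : Set.Ioi (0 : ℝ), η (r ^ 2) ∂Measure.volumeIoiPow (Module.finrank ℝ E - 1) := by
  obtain ⟨x, hx⟩ := exists_norm_eq E (Real.sqrt_nonneg 2)
  have hpos : 0 < ∫ z : E, η (‖z‖ ^ 2) :=
    Continuous.integral_pos_of_hasCompactSupport_nonneg_nonzero (x := x) (by fun_prop)
      (hasCompactSupport_radial hη3) (fun z => hη0 _) (by simpa [hx] using hη2)
  have hpolar := integral_fun_norm_mul_of_smul_eq (volume : Measure E) (fun r => η (r ^ 2))
    (g := fun _ => 1) fun _ _ _ => rfl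
  simp only [mul_one] at hpolar
  rw [hpolar] at hpos
  exact pos_of_mul_pos_left hpos (integral_nonneg fun _ => zero_le_one)

variable (μ : Measure E) [μ.IsAddHaarMeasure]

theorem integral_radial_mul_fderiv_add_eq_zero [Nontrivial E] {η : ℝ → ℝ} (hη : ContDiff ℝ 1 η)
    (hη1 : ∀ s < 1, η s = 0) (hη3 : ∀ s, 3 ≤ s → η s = 0) {u : E → ℝ}
    (hu : ContDiffOn ℝ 1 u {0}ᶜ) (v : E) : ∫ z, η (‖z‖ ^ 2) * fderiv ℝ u z v ∂μ +
      ∫ z, 2 * deriv η (‖z‖ ^ 2) * (⟪z, v⟫_ℝ * u z) ∂μ = 0 := by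
  have hcontr : ContDiff ℝ 1 fun z => η (‖z‖ ^ 2) * u z := contDiff_radial_mul hη hη1 hu
  have hsupp : HasCompactSupport fun z => η (‖z‖ ^ 2) * u z :=
    (hasCompactSupport_radial hη3).mul_right
  have hint : Integrable (fun z => fderiv ℝ (fun z => η (‖z‖ ^ 2) * u z) z v) μ :=
    ((hcontr.continuous_fderiv one_ne_zero).clm_apply continuous_const)
      |>.integrable_of_hasCompactSupport (hsupp.fderiv_apply ℝ v)
  have hint₁ : Integrable (fun z => η (‖z‖ ^ 2) * fderiv ℝ u z v) μ := by
    have hcont : ContDiffOn ℝ 0 (fun z => fderiv ℝ u z v) {0}ᶜ := contDiffOn_zero.2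
      ((hu.continuousOn_fderiv_of_isOpen isOpen_compl_singleton le_rfl).clm_apply
        continuousOn_const)
    exact (contDiff_radial_mul (hη.of_le zero_le_one) hη1 hcont).continuous
      |>.integrable_of_hasCompactSupport (hasCompactSupport_radial hη3).mul_right
  have hfderiv : ∀ᵐ z ∂μ, fderiv ℝ (fun z => η (‖z‖ ^ 2) * u z) z v =
      η (‖z‖ ^ 2) * fderiv ℝ u z v + 2 * deriv η (‖z‖ ^ 2) * (⟪z, v⟫_ℝ * u z) := by
    filter_upwards [Measure.ae_ne μ 0] with z hz
    exact fderiv_radial_mul_apply (hη.differentiable one_ne_zero)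
      ((hu.contDiffAt (isOpen_compl_singleton.mem_nhds hz)).differentiableAt one_ne_zero) v
  have hint₂ : Integrable (fun z => 2 * deriv η (‖z‖ ^ 2) * (⟪z, v⟫_ℝ * u z)) μ :=
    (hint.sub hint₁).congr (hfderiv.mono fun z hz => by simp [hz])
  rw [← integral_add hint₁ hint₂, ← integral_congr_ae hfderiv,
    integral_fderiv_apply_eq_zero μ hcontr hsupp]

-- The derivative of `η(‖z‖²) u(z)` has integral zero over `E`; polar coordinates turn this into a
-- relation between integrals over the sphere whose constants do not depend on `u`.
theorem exists_mul_integral_sphere_fderiv_add [Nontrivial E] : ∃ c₁ c₂ : ℝ, 0 < c₁ ∧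
    ∀ u : E → ℝ, ContDiffOn ℝ 1 u {0}ᶜ → (∀ r : ℝ, 0 < r → ∀ z, u (r • z) = r * u z) → ∀ v : E,
      c₁ * ∫ x : sphere (0 : E) 1, fderiv ℝ u x v ∂μ.toSphere +
        c₂ * ∫ x : sphere (0 : E) 1, ⟪(x : E), v⟫_ℝ * u x ∂μ.toSphere = 0 := by
  obtain ⟨η, hη, hη_nonneg, hη2, hη1, hη3⟩ := exists_cutoff
  refine ⟨_, ∫ r : Set.Ioi (0 : ℝ), 2 * deriv η (r ^ 2) * r ^ 2
      ∂Measure.volumeIoiPow (Module.finrank ℝ E - 1),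
    integral_volumeIoiPow_sq_pos (E := E) hη.continuous hη_nonneg hη2 hη3, fun u hu hom v => ?_⟩
  have hpolar₁ := integral_fun_norm_mul_of_smul_eq μ (fun r => η (r ^ 2))
    (g := fun z => fderiv ℝ u z v) fun r hr z => by
      rw [smul_right_injective _ hr.ne' (smul_fderiv_smul_of_map_smul (hom r hr) z)]
  have hpolar₂ := integral_fun_norm_mul_of_smul_eq μ (fun r => 2 * deriv η (r ^ 2) * r ^ 2)
    (g := fun z => ⟪z, v⟫_ℝ * u z / ‖z‖ ^ 2) fun r hr z => by
      simp only [hom r hr, norm_smul, real_inner_smul_left, Real.norm_of_nonneg hr.le]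
      rw [mul_mul_mul_comm, mul_pow, ← sq, mul_div_mul_left _ _ (pow_pos hr 2).ne']
  simp only [norm_eq_of_mem_sphere, one_pow, div_one] at hpolar₂
  rw [← hpolar₁, ← hpolar₂, ← integral_radial_mul_fderiv_add_eq_zero μ hη hη1 hη3 hu v]
  congr 2 with z
  obtain rfl | hz := eq_or_ne z 0
  · simp
  · field_simp

theorem integral_sphere_fderiv_apply [Nontrivial E] {u : E → ℝ} (hu : ContDiffOn ℝ 1 u {0}ᶜ)
    (hom : ∀ r : ℝ, 0 < r → ∀ z, u (r • z) = r * u z) (v : E) :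
    ∫ x : sphere (0 : E) 1, fderiv ℝ u x v ∂μ.toSphere =
      Module.finrank ℝ E * ∫ x : sphere (0 : E) 1, ⟪(x : E), v⟫_ℝ * u x ∂μ.toSphere := by
  obtain ⟨c₁, c₂, hc₁, h⟩ := exists_mul_integral_sphere_fderiv_add μ
  let b := stdOrthonormalBasis ℝ E
  -- Linear functions `u = ⟪·, b i⟫`, summed over `i`, determine the ratio of the constants.
  have hlin (i) : c₁ * μ.toSphere.real Set.univ +
      c₂ * ∫ x : sphere (0 : E) 1, ⟪(x : E), b i⟫_ℝ ^ 2 ∂μ.toSphere = 0 := by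
    have := h (innerSL ℝ (b i)) (innerSL ℝ (b i)).contDiff.contDiffOn (by simp) (b i)
    simpa only [ContinuousLinearMap.fderiv, innerSL_apply_apply, OrthonormalBasis.norm_eq_one,
      real_inner_self_eq_norm_sq, one_pow, integral_const, smul_eq_mul, mul_one, ← sq,
      real_inner_comm (b i)] using this
  have hsum : ∑ i, ∫ x : sphere (0 : E) 1, ⟪(x : E), b i⟫_ℝ ^ 2 ∂μ.toSphere =
      μ.toSphere.real Set.univ := by
    rw [← integral_finsetSum]
    · simp [b.sum_sq_inner_left]
    · exact fun i _ => Continuous.integrable_of_hasCompactSupport (by fun_prop)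
        (HasCompactSupport.of_compactSpace _)
  have hratio : (c₁ * Module.finrank ℝ E + c₂) * μ.toSphere.real Set.univ = 0 := by
    have := Finset.sum_congr rfl fun i (_ : i ∈ Finset.univ) => hlin i
    rw [Finset.sum_add_distrib, ← Finset.mul_sum, ← Finset.mul_sum, hsum] at this
    simp only [Finset.sum_const, Finset.card_univ, Fintype.card_fin, nsmul_eq_mul, mul_zero] at this
    linear_combination this
  have hμ : μ.toSphere.real Set.univ ≠ 0 := by
    have : NeZero μ.toSphere := ⟨μ.toSphere_ne_zero⟩
    exact measureReal_univ_ne_zero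
  have hc : c₁ * Module.finrank ℝ E + c₂ = 0 := (mul_eq_zero.1 hratio).resolve_right hμ
  refine mul_left_cancel₀ hc₁.ne' ?_
  linear_combination h u hu hom v - hc * ∫ x : sphere (0 : E) 1, ⟪(x : E), v⟫_ℝ * u x ∂μ.toSphere

end SphereIntegration

section SecondVariation

open Polynomial in
theorem coeff_nonneg_of_eventually_eval_nonneg {R : ℝ[X]} {k : ℕ} (hR : ∀ d < k, R.coeff d = 0)
    (h : ∀ᶠ t in 𝓝[>] 0, 0 ≤ R.eval t) : 0 ≤ R.coeff k := by
  obtain ⟨Q, rfl⟩ := X_pow_dvd_iff.2 hR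
  rw [coeff_X_pow_mul', if_pos le_rfl, Nat.sub_self, coeff_zero_eq_eval_zero]
  have hlim : Filter.Tendsto (Q.eval ·) (𝓝[>] 0) (𝓝 (Q.eval 0)) :=
    (Q.continuous.tendsto 0).mono_left nhdsWithin_le_nhds
  refine ge_of_tendsto hlim ?_
  filter_upwards [h, self_mem_nhdsWithin] with t ht (ht0 : 0 < t)
  rw [eval_mul, eval_pow, eval_X] at ht
  exact nonneg_of_mul_nonneg_right ht (pow_pos ht0 k)

variable {α : Type*} [TopologicalSpace α] [CompactSpace α] [MeasurableSpace α]
  [OpensMeasurableSpace α]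

theorem integrable_of_continuous {μ : Measure α} [IsFiniteMeasure μ] {E : Type*}
    [NormedAddCommGroup E] {φ : α → E} (hφ : Continuous φ) : Integrable φ μ :=
  hφ.integrable_of_hasCompactSupport (HasCompactSupport.of_compactSpace φ)

open Polynomial in
theorem exists_polynomial_integral_one_add_mul_pow (μ : Measure α) [IsFiniteMeasure μ]
    {φ : α → ℝ} (hφ : Continuous φ) (N : ℕ) : ∃ P : ℝ[X],
      (∀ t, P.eval t = ∫ x, (1 + t * φ x) ^ N ∂μ) ∧
        ∀ k, P.coeff k = N.choose k * ∫ x, φ x ^ k ∂μ := by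
  refine ⟨∑ k ∈ Finset.range (N + 1), monomial k (N.choose k * ∫ x, φ x ^ k ∂μ), fun t => ?_,
    fun k => ?_⟩
  · simp only [add_comm (1 : ℝ), add_pow, one_pow, mul_one, mul_pow, eval_finsetSum,
      eval_monomial]
    rw [integral_finsetSum _ fun k _ => integrable_of_continuous (by fun_prop)]
    refine Finset.sum_congr rfl fun k _ => ?_
    rw [integral_mul_const, integral_const_mul]
    ring
  · simp only [finsetSum_coeff, coeff_monomial, Finset.sum_ite_eq', Finset.mem_range]
    split_ifs with hk
    · rfl
    · rw [Nat.choose_eq_zero_of_lt (by omega), Nat.cast_zero, zero_mul]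

-- The constant and linear terms in `t` cancel; the claim compares the coefficients of `t ^ 2`.
open Polynomial in
theorem choose_two_mul_integral_sq_le {μ : Measure α} [IsFiniteMeasure μ]
    {φ κ : α → ℝ} (hφ : Continuous φ) (hκ : Continuous κ) (hφ0 : ∫ x, φ x ∂μ = 0) {N : ℕ}
    (h : ∀ᶠ t in 𝓝[>] 0, (∫ x, (1 + t * φ x) ^ N ∂μ) * (∫ x, (1 + -t * φ x) ^ N ∂μ) ≤
      (∫ x, (1 + t ^ 2 * κ x) ^ N ∂μ) ^ 2) :
    N.choose 2 * ∫ x, φ x ^ 2 ∂μ ≤ N * ∫ x, κ x ∂μ := by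
  rcases eq_zero_or_neZero μ with rfl | _
  · simp
  obtain ⟨P, hP, hPc⟩ := exists_polynomial_integral_one_add_mul_pow μ hφ N
  obtain ⟨Q, hQ, hQc⟩ := exists_polynomial_integral_one_add_mul_pow μ hκ N
  set R : ℝ[X] := expand ℝ 2 Q * expand ℝ 2 Q - P * P.comp (C (-1) * X) with hR_def
  have hR : ∀ᶠ t in 𝓝[>] 0, 0 ≤ R.eval t := h.mono fun t ht => by
    simpa [hR_def, expand_eval, hP, hQ, ← sq] using ht
  have hcoeff (d : ℕ) : R.coeff d = ∑ p ∈ Finset.HasAntidiagonal.antidiagonal d,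
      ((expand ℝ 2 Q).coeff p.1 * (expand ℝ 2 Q).coeff p.2 -
        P.coeff p.1 * (P.coeff p.2 * (-1) ^ p.2)) := by
    simp only [hR_def, coeff_sub, coeff_mul, comp_C_mul_X_coeff, Finset.sum_sub_distrib]
  have hR01 : ∀ d < 2, R.coeff d = 0 := by
    intro d hd
    interval_cases d <;>
      simp [hcoeff, Finset.Nat.antidiagonal_succ, coeff_expand, hPc, hQc, hφ0]
  have hR2 : R.coeff 2 =
      2 * μ.real Set.univ * (N * ∫ x, κ x ∂μ - N.choose 2 * ∫ x, φ x ^ 2 ∂μ) := by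
    simp [hcoeff, Finset.Nat.antidiagonal_succ, coeff_expand, hPc, hQc, hφ0]
    ring
  have hnonneg := hR2 ▸ coeff_nonneg_of_eventually_eval_nonneg hR01 hR
  have hmass : 0 < 2 * μ.real Set.univ := mul_pos two_pos measureReal_univ_pos
  exact sub_nonneg.1 (nonneg_of_mul_nonneg_right hnonneg hmass)

end SecondVariation

/-! ### The support function -/

section SupportFunction

open scoped Pointwise Gradient

variable {n : ℕ} {K : Set (Eu n)}

theorem sfn_smul (K : Set (Eu n)) {r : ℝ} (hr : 0 ≤ r) (z : Eu n) :
    sfn K (r • z) = r * sfn K z := by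
  have himage : (fun y => ⟪r • z, y⟫_ℝ) '' K = r • (fun y => ⟪z, y⟫_ℝ) '' K := by
    simp only [real_inner_smul_left, ← Set.image_smul, Set.image_image, smul_eq_mul]
  rw [sfn, himage, Real.sSup_smul_of_nonneg hr, smul_eq_mul, sfn]

theorem sfn_zero (K : Set (Eu n)) : sfn K 0 = 0 := by
  simpa only [zero_smul, zero_mul] using sfn_smul K le_rfl 0

theorem gradient_sfn_smul (K : Set (Eu n)) {r : ℝ} (hr : 0 < r) (z : Eu n) :
    ∇ (sfn K) (r • z) = ∇ (sfn K) z := by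
  have h := smul_fderiv_smul_of_map_smul (a := r) (fun w => sfn_smul K hr.le w) z
  exact congrArg (InnerProductSpace.toDual ℝ (Eu n)).symm (smul_right_injective _ hr.ne' h)

theorem smul_hessA_smul (K : Set (Eu n)) {r : ℝ} (hr : 0 < r) (z : Eu n) :
    r • hessA K (r • z) = hessA K z := by
  have h := smul_fderiv_smul_of_map_smul (a := (1 : ℝ)) (u := ∇ (sfn K)) (r := r)
    (fun w => by rw [gradient_sfn_smul K hr, one_smul]) z
  rwa [one_smul] at h

theorem inner_le_sfn (hK : IsCompact K) (z : Eu n) {y : Eu n} (hy : y ∈ K) :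
    ⟪z, y⟫_ℝ ≤ sfn K z :=
  le_csSup (hK.image (by fun_prop)).bddAbove (Set.mem_image_of_mem _ hy)

theorem exists_inner_eq_sfn (hK : IsCompact K) (hne : K.Nonempty) (z : Eu n) :
    ∃ y ∈ K, ⟪z, y⟫_ℝ = sfn K z :=
  (hK.image (f := fun y => ⟪z, y⟫_ℝ) (by fun_prop)).sSup_mem (hne.image _)

theorem sfn_add_le (hK : IsCompact K) (hne : K.Nonempty) (z w : Eu n) :
    sfn K (z + w) ≤ sfn K z + sfn K w := by
  obtain ⟨y, hy, hzw⟩ := exists_inner_eq_sfn hK hne (z + w)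
  rw [← hzw, inner_add_left]
  exact add_le_add (inner_le_sfn hK z hy) (inner_le_sfn hK w hy)

theorem mem_iff_forall_inner_le_sfn (hK : IsCompact K) (hconv : Convex ℝ K) (hne : K.Nonempty)
    {y : Eu n} : y ∈ K ↔ ∀ z, ⟪z, y⟫_ℝ ≤ sfn K z := by
  refine ⟨fun hy z => inner_le_sfn hK z hy, fun hy => ?_⟩
  by_contra hyK
  obtain ⟨f, s, hfK, hfy⟩ := geometric_hahn_banach_closed_point hconv hK.isClosed hyK
  obtain ⟨z, rfl⟩ := (InnerProductSpace.toDual ℝ (Eu n)).surjective f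
  simp only [InnerProductSpace.toDual_apply_apply] at hfK hfy
  obtain ⟨p, hp, hzp⟩ := exists_inner_eq_sfn hK hne z
  linarith [hfK p hp, hy z]

end SupportFunction

namespace IsSmoothConvexBody

open scoped Gradient

variable {n : ℕ} {K : Set (Eu n)} {z w : Eu n}

theorem nonempty (hK : IsSmoothConvexBody K) : K.Nonempty :=
  hK.interior_nonempty.mono interior_subset

theorem sfn_pos (hK : IsSmoothConvexBody K) (hz : z ≠ 0) : 0 < sfn K z := by
  have hunit : 0 < sfn K (‖z‖⁻¹ • z) := hK.pos ⟨_, by simp [norm_smul, hz]⟩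
  rw [sfn_smul K (by positivity)] at hunit
  exact pos_of_mul_pos_right hunit (by positivity)

theorem sfn_nonneg (hK : IsSmoothConvexBody K) (z : Eu n) : 0 ≤ sfn K z := by
  rcases eq_or_ne z 0 with rfl | hz
  · exact (sfn_zero K).ge
  · exact (hK.sfn_pos hz).le

theorem contDiffOn_sfn (hK : IsSmoothConvexBody K) : ContDiffOn ℝ 2 (sfn K) {0}ᶜ :=
  hK.smooth.of_le (WithTop.coe_le_coe.2 (le_top (a := (2 : ℕ∞))))

theorem differentiableAt_sfn (hK : IsSmoothConvexBody K) (hz : z ≠ 0) :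
    DifferentiableAt ℝ (sfn K) z :=
  (hK.contDiffOn_sfn.contDiffAt (isOpen_compl_singleton.mem_nhds hz)).differentiableAt two_ne_zero

theorem contDiffOn_fderiv_sfn (hK : IsSmoothConvexBody K) :
    ContDiffOn ℝ 1 (fderiv ℝ (sfn K)) {0}ᶜ :=
  hK.contDiffOn_sfn.fderiv_of_isOpen isOpen_compl_singleton (by norm_num)

theorem contDiffOn_gradient (hK : IsSmoothConvexBody K) : ContDiffOn ℝ 1 (∇ (sfn K)) {0}ᶜ :=
  (InnerProductSpace.toDual ℝ (Eu n)).symm.contDiff.comp_contDiffOn hK.contDiffOn_fderiv_sfn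

theorem hasFDerivAt_gradient (hK : IsSmoothConvexBody K) (hz : z ≠ 0) :
    HasFDerivAt (∇ (sfn K)) (hessA K z) z :=
  ((hK.contDiffOn_gradient.contDiffAt (isOpen_compl_singleton.mem_nhds hz)).differentiableAt
    one_ne_zero).hasFDerivAt

theorem continuousOn_hessA (hK : IsSmoothConvexBody K) : ContinuousOn (hessA K) {0}ᶜ :=
  hK.contDiffOn_gradient.continuousOn_fderiv_of_isOpen isOpen_compl_singleton le_rfl

theorem continuous_sfn (hK : IsSmoothConvexBody K) : Continuous fun x : Sph n => sfn K x :=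
  hK.contDiffOn_sfn.continuousOn.comp_continuous continuous_subtype_val ne_zero_of_mem_unit_sphere

theorem continuous_gradient (hK : IsSmoothConvexBody K) :
    Continuous fun x : Sph n => ∇ (sfn K) x :=
  hK.contDiffOn_gradient.continuousOn.comp_continuous continuous_subtype_val
    ne_zero_of_mem_unit_sphere

theorem continuous_hessA (hK : IsSmoothConvexBody K) : Continuous fun x : Sph n => hessA K x :=
  hK.continuousOn_hessA.comp_continuous continuous_subtype_val ne_zero_of_mem_unit_sphere

theorem inner_gradient_self (hK : IsSmoothConvexBody K) (hz : z ≠ 0) :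
    ⟪∇ (sfn K) z, z⟫_ℝ = sfn K z := by
  rw [inner_gradient_left]
  simpa using hasFDerivAt_apply_self_of_homogeneous (k := 1)
    (hK.differentiableAt_sfn hz).hasFDerivAt
    fun r hr => by rw [sfn_smul K hr.le, pow_one, smul_eq_mul]

theorem hessA_apply_self (hK : IsSmoothConvexBody K) (hz : z ≠ 0) : hessA K z z = 0 := by
  simpa using hasFDerivAt_apply_self_of_homogeneous (k := 0) (hK.hasFDerivAt_gradient hz)
    fun r hr => by rw [gradient_sfn_smul K hr, pow_zero, one_smul]

theorem inner_hessA_left (hK : IsSmoothConvexBody K) (hz : z ≠ 0) (v w : Eu n) :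
    ⟪hessA K z v, w⟫_ℝ = fderiv ℝ (fderiv ℝ (sfn K)) z v w := by
  have hinner := (hK.hasFDerivAt_gradient hz).inner ℝ (hasFDerivAt_const w z)
  simp only [inner_gradient_left] at hinner
  have happly := ((hK.contDiffOn_fderiv_sfn.contDiffAt (isOpen_compl_singleton.mem_nhds
    hz)).differentiableAt one_ne_zero).hasFDerivAt.clm_apply (hasFDerivAt_const w z)
  simpa [fderivInnerCLM_apply] using DFunLike.congr_fun (hinner.unique happly) v

theorem inner_hessA_comm (hK : IsSmoothConvexBody K) (hz : z ≠ 0) (v w : Eu n) :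
    ⟪hessA K z v, w⟫_ℝ = ⟪hessA K z w, v⟫_ℝ := by
  rw [hK.inner_hessA_left hz, hK.inner_hessA_left hz]
  exact (hK.contDiffOn_sfn.contDiffAt (isOpen_compl_singleton.mem_nhds hz)).isSymmSndFDerivAt
    (by simp) v w

theorem gradient_eq_of_inner_eq (hK : IsSmoothConvexBody K) (hz : z ≠ 0) {p : Eu n}
    (hp : p ∈ K) (hzp : ⟪z, p⟫_ℝ = sfn K z) : ∇ (sfn K) z = p := by
  have hmin : IsLocalMin (fun u => sfn K u - ⟪p, u⟫_ℝ) z := .of_forall fun u => by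
    simpa only [real_inner_comm z p, hzp, sub_self, sub_nonneg, real_inner_comm u p] using
      inner_le_sfn hK.compact u hp
  have hderiv := hmin.hasFDerivAt_eq_zero
    ((hK.differentiableAt_sfn hz).hasFDerivAt.sub (innerSL ℝ p).hasFDerivAt)
  refine ext_inner_right ℝ fun u => ?_
  rw [inner_gradient_left, sub_eq_zero.1 hderiv, innerSL_apply_apply]

theorem gradient_mem (hK : IsSmoothConvexBody K) (hz : z ≠ 0) : ∇ (sfn K) z ∈ K := by
  obtain ⟨p, hp, hzp⟩ := exists_inner_eq_sfn hK.compact hK.nonempty z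
  rwa [hK.gradient_eq_of_inner_eq hz hp hzp]

end IsSmoothConvexBody

/-! ### The cone map -/

theorem hasFDerivAt_norm {E : Type*} [NormedAddCommGroup E] [InnerProductSpace ℝ E] {z : E}
    (hz : z ≠ 0) : HasFDerivAt (fun z : E => ‖z‖) (‖z‖⁻¹ • innerSL ℝ z) z := by
  have h := (hasStrictFDerivAt_norm_sq z).hasFDerivAt.sqrt (by simpa using hz)
  simp only [sqrt_sq (norm_nonneg _)] at h
  convert h using 1
  ext v
  simp only [smul_apply, coe_innerSL_apply, smul_eq_mul, one_div, mul_inv_rev, nsmul_eq_mul,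
    Nat.cast_ofNat]
  ring

/-- The map `z ↦ ‖z‖ ∇h_K(z)`, which sends the ray through a unit vector `x` to the ray through the
boundary point of `K` with outer normal `x`, and the unit ball to `K`. Its Jacobian on the sphere is
the density `dens K`. -/
def coneMap {n : ℕ} (K : Set (Eu n)) (z : Eu n) : Eu n := ‖z‖ • gradient (sfn K) z

/-- The measure `dV = h det(A + x ⊗ x) dθ` on the sphere, a multiple of the cone-volume measure
of `K`. -/
def coneMeasure {n : ℕ} (K : Set (Eu n)) : Measure (Sph n) :=
  (sphMeas n).withDensity fun x => ENNReal.ofReal (dens K x)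

instance {n : ℕ} : IsFiniteMeasure (sphMeas n) :=
  inferInstanceAs (IsFiniteMeasure (volume : Measure (Eu n)).toSphere)

section ConeMap

open scoped Gradient

variable {n : ℕ} {K : Set (Eu n)} {z w : Eu n}

theorem mem_image_coneMap_starRegion {ρ : Sph n → ℝ} {y : Eu n} :
    y ∈ coneMap K '' starRegion ρ ↔
      ∃ x : Sph n, ∃ r : ℝ, 0 < r ∧ r < ρ x ∧ r • ∇ (sfn K) x = y := by
  have hcone (x : Sph n) (r : Set.Ioi (0 : ℝ)) :
      coneMap K (polarMap (Eu n) (x, r)) = (r : ℝ) • ∇ (sfn K) x := by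
    simp [coneMap, polarMap, gradient_sfn_smul K r.2, norm_smul, abs_of_pos r.2.out]
  simp [starRegion, Set.image_image, hcone, and_left_comm]

theorem fderiv_coneMap_smul (K : Set (Eu n)) {r : ℝ} (hr : 0 < r) (z : Eu n) :
    fderiv ℝ (coneMap K) (r • z) = fderiv ℝ (coneMap K) z := by
  refine smul_right_injective _ hr.ne' (smul_fderiv_smul_of_map_smul (a := r) (fun w => ?_) z)
  rw [coneMap, coneMap, gradient_sfn_smul K hr, norm_smul, norm_of_nonneg hr.le, mul_smul]

namespace IsSmoothConvexBody

theorem exists_eq_smul_of_hessA_apply_eq_zero (hK : IsSmoothConvexBody K) (hz : z ≠ 0)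
    (hw : hessA K z w = 0) : ∃ c : ℝ, w = c • z := by
  obtain ⟨r, hr, x, rfl⟩ : ∃ r : ℝ, 0 < r ∧ ∃ x : Sph n, z = r • (x : Eu n) :=
    ⟨‖z‖, norm_pos_iff.2 hz, ⟨‖z‖⁻¹ • z, by simp [norm_smul, hz]⟩, by simp [smul_smul, hz]⟩
  have hxw : hessA K x w = 0 := by rw [← smul_hessA_smul K hr, smul_apply, hw, smul_zero]
  have hxx : hessA K x x = 0 := hK.hessA_apply_self (ne_zero_of_mem_unit_sphere x)
  suffices h : w - ⟪(x : Eu n), w⟫_ℝ • (x : Eu n) = 0 from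
    ⟨⟪(x : Eu n), w⟫_ℝ * r⁻¹, by
      rw [smul_smul, inv_mul_cancel_right₀ hr.ne', ← sub_eq_zero, h]⟩
  by_contra hne
  simpa [tens, hxw, hxx, inner_sub_right, inner_smul_right] using hK.posdef x _ hne

-- Equality in subadditivity makes `∇h` constant on `z + s w`, `s ≥ 0`, so `A(z) w = 0`.
theorem sameRay_of_gradient_eq (hK : IsSmoothConvexBody K) (hz : z ≠ 0) (hw : w ≠ 0)
    (h : ∇ (sfn K) z = ∇ (sfn K) w) : SameRay ℝ z w := by
  have hconst : ∀ s : ℝ, 0 ≤ s → ∇ (sfn K) (z + s • w) = ∇ (sfn K) z := by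
    intro s hs
    have hinner : ⟪z + s • w, ∇ (sfn K) z⟫_ℝ = sfn K z + s * sfn K w := by
      rw [real_inner_comm, inner_add_right, hK.inner_gradient_self hz, h, inner_smul_right,
        hK.inner_gradient_self hw]
    have hne : z + s • w ≠ 0 := by
      intro h0
      rw [h0, inner_zero_left] at hinner
      linarith [hK.sfn_pos hz, mul_nonneg hs (hK.sfn_nonneg w)]
    refine hK.gradient_eq_of_inner_eq hne (hK.gradient_mem hz) (le_antisymm
      (inner_le_sfn hK.compact _ (hK.gradient_mem hz)) ?_)
    rw [hinner, ← sfn_smul K hs]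
    exact sfn_add_le hK.compact hK.nonempty _ _
  have hA : hessA K z w = 0 := by
    have hray : HasDerivAt (fun s : ℝ => z + s • w) w 0 := by
      simpa using ((hasDerivAt_id (0 : ℝ)).smul_const w).const_add z
    have hgrad : HasDerivAt (fun s : ℝ => ∇ (sfn K) (z + s • w)) (hessA K z w) 0 :=
      HasFDerivAt.comp_hasDerivAt (0 : ℝ) (l := ∇ (sfn K))
        (by simpa using hK.hasFDerivAt_gradient hz) hray
    have hzero : HasDerivWithinAt (fun s : ℝ => ∇ (sfn K) (z + s • w)) 0 (Set.Ici 0) 0 :=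
      (hasDerivWithinAt_const _ _ (∇ (sfn K) z)).congr hconst (hconst 0 le_rfl)
    exact (uniqueDiffWithinAt_Ici (0 : ℝ)).eq_deriv _ hgrad.hasDerivWithinAt hzero
  obtain ⟨c, rfl⟩ := hK.exists_eq_smul_of_hessA_apply_eq_zero hz hA
  have hc : 0 < c * sfn K z := by
    rw [← hK.inner_gradient_self hz, ← inner_smul_right, h, hK.inner_gradient_self hw]
    exact hK.sfn_pos hw
  exact SameRay.sameRay_nonneg_smul_right z (pos_of_mul_pos_left hc (hK.sfn_nonneg z)).le

theorem injOn_coneMap (hK : IsSmoothConvexBody K) : Set.InjOn (coneMap K) {0}ᶜ := by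
  have norm_le : ∀ z w : Eu n, z ≠ 0 → w ≠ 0 → coneMap K z = coneMap K w → ‖z‖ ≤ ‖w‖ := by
    intro z w hz hw h
    have hle : ‖z‖ * sfn K z ≤ ‖w‖ * sfn K z := calc
      ‖z‖ * sfn K z = ⟪z, coneMap K z⟫_ℝ := by
        rw [coneMap, inner_smul_right, real_inner_comm, hK.inner_gradient_self hz]
      _ = ‖w‖ * ⟪z, ∇ (sfn K) w⟫_ℝ := by rw [h, coneMap, inner_smul_right]
      _ ≤ ‖w‖ * sfn K z := by gcongr; exact inner_le_sfn hK.compact z (hK.gradient_mem hw)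
    exact le_of_mul_le_mul_right hle (hK.sfn_pos hz)
  intro z hz w hw h
  have hnorm : ‖z‖ = ‖w‖ := le_antisymm (norm_le z w hz hw h) (norm_le w z hw hz h.symm)
  rw [coneMap, coneMap, hnorm] at h
  exact (hK.sameRay_of_gradient_eq hz hw
    (smul_right_injective _ (norm_ne_zero_iff.2 hw) h)).eq_of_norm_eq hnorm

-- The normal direction `x` maximizes `⟪x, y⟫ / h(x)` over the unit sphere.
theorem exists_smul_gradient_eq (hK : IsSmoothConvexBody K) {y : Eu n} (hy : y ≠ 0) :
    ∃ x : Sph n, ∃ r : ℝ, 0 < r ∧ r • ∇ (sfn K) x = y := by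
  let x₀ : Sph n := ⟨‖y‖⁻¹ • y, by simp [norm_smul, hy]⟩
  have hsfn := hK.continuous_sfn
  have hpos (x : Sph n) : 0 < sfn K x := hK.pos x
  obtain ⟨x, -, hx⟩ := isCompact_univ.exists_isMaxOn ⟨x₀, Set.mem_univ _⟩
    (f := fun x : Sph n => ⟪(x : Eu n), y⟫_ℝ / sfn K x)
    (Continuous.continuousOn (by fun_prop (disch := exact fun x => (hpos x).ne')))
  set r := ⟪(x : Eu n), y⟫_ℝ / sfn K x with hr
  have hmax (u : Sph n) : ⟪(u : Eu n), y⟫_ℝ ≤ r * sfn K u :=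
    (div_le_iff₀ (hpos u)).1 (hx (Set.mem_univ u))
  have hr0 : 0 < r := by
    refine pos_of_mul_pos_left ((?_ : 0 < ⟪(x₀ : Eu n), y⟫_ℝ).trans_le (hmax x₀)) (hpos x₀).le
    rw [real_inner_smul_left, real_inner_self_eq_norm_sq]
    positivity
  have hmem : r⁻¹ • y ∈ K := by
    refine (mem_iff_forall_inner_le_sfn hK.compact hK.convex hK.nonempty).2 fun u => ?_
    rcases eq_or_ne u 0 with rfl | hu
    · rw [inner_zero_left, sfn_zero]
    have h := hmax ⟨‖u‖⁻¹ • u, by simp [norm_smul, hu]⟩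
    rw [real_inner_smul_left, sfn_smul K (by positivity), mul_left_comm] at h
    rw [inner_smul_right, inv_mul_le_iff₀ hr0]
    exact le_of_mul_le_mul_left h (by positivity)
  refine ⟨x, r, hr0, ?_⟩
  rw [hK.gradient_eq_of_inner_eq (ne_zero_of_mem_unit_sphere x) hmem, smul_inv_smul₀ hr0.ne']
  rw [inner_smul_right, inv_mul_eq_iff_eq_mul₀ hr0.ne', hr, div_mul_cancel₀ _ (hpos x).ne']

theorem hasFDerivAt_coneMap (hK : IsSmoothConvexBody K) (hz : z ≠ 0) :
    HasFDerivAt (coneMap K)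
      (‖z‖ • hessA K z + (‖z‖⁻¹ • innerSL ℝ z).smulRight (∇ (sfn K) z)) z :=
  (hasFDerivAt_norm hz).smul (hK.hasFDerivAt_gradient hz)

theorem rK_nonneg (hK : IsSmoothConvexBody K) (x : Sph n) : 0 ≤ rK K x := by
  have hpos : LinearMap.IsPositive
      ((hessA K x + tens (x : Eu n) : Eu n →L[ℝ] Eu n) : Eu n →ₗ[ℝ] Eu n) := by
    refine (LinearMap.isPositive_iff _).2 ⟨fun v w => ?_, fun v => ?_⟩
    · have hA : ⟪hessA K x v, w⟫_ℝ = ⟪v, hessA K x w⟫_ℝ := by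
        rw [hK.inner_hessA_comm (ne_zero_of_mem_unit_sphere x), real_inner_comm]
      simp [tens, inner_add_left, inner_add_right, hA, inner_smul_left, inner_smul_right,
        real_inner_comm, mul_comm]
    · rcases eq_or_ne v 0 with rfl | hv
      · simp
      · exact (hK.posdef x v hv).le
  let b := stdOrthonormalBasis ℝ (Eu n)
  rw [rK, ← LinearMap.det_toMatrix b.toBasis]
  exact ((LinearMap.posSemidef_toMatrix_iff b).2 hpos).det_nonneg

theorem dens_nonneg (hK : IsSmoothConvexBody K) (x : Sph n) : 0 ≤ dens K x :=
  mul_nonneg (hK.pos x).le (hK.rK_nonneg x)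

-- On the sphere the derivative of `coneMap K` is a transvection along `∇h - x` after `A + x ⊗ x`.
theorem det_fderiv_coneMap (hK : IsSmoothConvexBody K) (x : Sph n) :
    (fderiv ℝ (coneMap K) x).det = dens K x := by
  have hx := ne_zero_of_mem_unit_sphere x
  have hcomp : (fderiv ℝ (coneMap K) x : Eu n →ₗ[ℝ] Eu n) =
      (LinearMap.transvection (innerSL ℝ (x : Eu n) : Eu n →ₗ[ℝ] ℝ) (∇ (sfn K) x - x)).comp
        ((hessA K x + tens (x : Eu n) : Eu n →L[ℝ] Eu n) : Eu n →ₗ[ℝ] Eu n) := by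
    ext1 v
    have hA : ⟪(x : Eu n), hessA K x v⟫_ℝ = 0 := by
      rw [real_inner_comm, hK.inner_hessA_comm hx, hK.hessA_apply_self hx, inner_zero_left]
    simp [(hK.hasFDerivAt_coneMap hx).fderiv, tens, LinearMap.transvection.apply,
      inner_add_right, hA, inner_smul_right]
    module
  rw [ContinuousLinearMap.det, hcomp, LinearMap.det_comp, LinearMap.transvection.det, dens, rK]
  congr 1
  change 1 + ⟪(x : Eu n), ∇ (sfn K) x - x⟫_ℝ = sfn K x
  rw [inner_sub_right, real_inner_comm, hK.inner_gradient_self hx, inner_self_eq_one_of_norm_eq_one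
    (norm_eq_of_mem_sphere x)]
  ring

theorem continuous_dens (hK : IsSmoothConvexBody K) : Continuous fun x : Sph n => dens K x := by
  have htens : Continuous fun x : Sph n => tens (x : Eu n) := by
    unfold tens
    fun_prop
  exact hK.continuous_sfn.mul
    (ContinuousLinearMap.continuous_det.comp (hK.continuous_hessA.add htens))

theorem isFiniteMeasure_coneMeasure (hK : IsSmoothConvexBody K) :
    IsFiniteMeasure (coneMeasure K) :=
  isFiniteMeasure_withDensity_ofReal (integrable_of_continuous hK.continuous_dens).2

theorem measurableSet_image_coneMap_starRegion (hK : IsSmoothConvexBody K) {ρ : Sph n → ℝ}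
    (hρ : Measurable ρ) : MeasurableSet (coneMap K '' starRegion ρ) :=
  (measurableSet_starRegion hρ).image_of_continuousOn_injOn
    (fun _ hz => (hK.hasFDerivAt_coneMap
      (starRegion_subset_compl_zero ρ hz)).continuousAt.continuousWithinAt)
    (hK.injOn_coneMap.mono (starRegion_subset_compl_zero ρ))

theorem volume_image_coneMap_starRegion (hK : IsSmoothConvexBody K) {ρ : Sph n → ℝ}
    (hρ : Continuous ρ) (hρ0 : ∀ x, 0 < ρ x) : volume (coneMap K '' starRegion ρ) =
      ENNReal.ofReal (∫ x, ρ x ^ (n + 1) / (n + 1) ∂coneMeasure K) := by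
  have := hK.isFiniteMeasure_coneMeasure
  have hdens : Measurable fun x : Sph n => ENNReal.ofReal (dens K x) :=
    hK.continuous_dens.measurable.ennreal_ofReal
  have hdet : Measurable fun z => ENNReal.ofReal |(fderiv ℝ (coneMap K) z).det| :=
    (ContinuousLinearMap.continuous_det.measurable.comp
      (measurable_fderiv ℝ (coneMap K))).abs.ennreal_ofReal
  rw [← lintegral_abs_det_fderiv_eq_addHaar_image volume (measurableSet_starRegion hρ.measurable)
    (fun z hz => (hK.hasFDerivAt_coneMap
      (starRegion_subset_compl_zero ρ hz)).differentiableAt.hasFDerivAt.hasFDerivWithinAt)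
    (hK.injOn_coneMap.mono (starRegion_subset_compl_zero ρ)),
    setLIntegral_starRegion volume hρ.measurable hρ0 hdet
      fun r hr z => by rw [fderiv_coneMap_smul K hr],
    ofReal_integral_eq_lintegral_ofReal (integrable_of_continuous (by fun_prop))
      (.of_forall fun x => by have := hρ0 x; positivity), coneMeasure,
    lintegral_withDensity_eq_lintegral_mul _ hdens (by fun_prop)]
  simp [hK.det_fderiv_coneMap, abs_of_nonneg (hK.dens_nonneg _), sphMeas]

end IsSmoothConvexBody

end ConeMap

section Taylor

theorem le_taylor_two_of_deriv_deriv_le {g g' g'' : ℝ → ℝ} {t M : ℝ} (ht : 0 ≤ t)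
    (hg : ∀ s ∈ Set.Icc 0 t, HasDerivAt g (g' s) s)
    (hg' : ∀ s ∈ Set.Icc 0 t, HasDerivAt g' (g'' s) s) (hM : ∀ s ∈ Set.Icc 0 t, g'' s ≤ M) :
    g t ≤ g 0 + t * g' 0 + t ^ 2 * (M / 2) := by
  have hmem {s : ℝ} (hs : s ∈ Set.Ico 0 t) : s ∈ Set.Icc 0 t := Set.Ico_subset_Icc_self hs
  have hline (s : ℝ) : HasDerivAt (fun s => g' 0 + s * M) M s := by
    simpa using ((hasDerivAt_id s).mul_const M).const_add (g' 0)
  have hparabola (s : ℝ) :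
      HasDerivAt (fun s => g 0 + s * g' 0 + s ^ 2 * (M / 2)) (g' 0 + s * M) s := by
    convert! (((hasDerivAt_id s).mul_const (g' 0)).const_add (g 0)).add
      ((hasDerivAt_pow 2 s).mul_const (M / 2)) using 1
    simp only [one_mul, Nat.cast_ofNat, Nat.add_one_sub_one, pow_one, add_right_inj]
    ring
  have hg'_le : ∀ s ∈ Set.Icc 0 t, g' s ≤ g' 0 + s * M :=
    image_le_of_deriv_right_le_deriv_boundary
      (fun s hs => (hg' s hs).continuousAt.continuousWithinAt)
      (fun s hs => (hg' s (hmem hs)).hasDerivWithinAt) (by simp)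
      (fun s _ => (hline s).continuousAt.continuousWithinAt)
      (fun s _ => (hline s).hasDerivWithinAt) fun s hs => hM s (hmem hs)
  exact image_le_of_deriv_right_le_deriv_boundary
    (fun s hs => (hg s hs).continuousAt.continuousWithinAt)
    (fun s hs => (hg s (hmem hs)).hasDerivWithinAt) (by simp)
    (fun s _ => (hparabola s).continuousAt.continuousWithinAt)
    (fun s _ => (hparabola s).hasDerivWithinAt) (fun s hs => hg'_le s (hmem hs))
    (Set.right_mem_Icc.2 ht)

variable {α E : Type*} [TopologicalSpace α] [CompactSpace α] [NormedAddCommGroup E]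
  [NormedSpace ℝ E] {U : Set E} {f : E → ℝ} {z w : α → E}

theorem eventually_forall_fderiv_fderiv_le (hU : IsOpen U) (hf : ContDiffOn ℝ 2 f U)
    (hz : Continuous z) (hw : Continuous w) (hzU : ∀ a, z a ∈ U) {ε : ℝ} (hε : 0 < ε) :
    ∀ᶠ s in 𝓝 (0 : ℝ), ∀ a, z a + s • w a ∈ U ∧
      fderiv ℝ (fderiv ℝ f) (z a + s • w a) (w a) (w a) ≤
        fderiv ℝ (fderiv ℝ f) (z a) (w a) (w a) + ε := by
  have hcurve : Continuous fun q : ℝ × α => z q.2 + q.1 • w q.2 := by fun_prop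
  have hD2 : ContinuousOn (fderiv ℝ (fderiv ℝ f)) U :=
    (hf.fderiv_of_isOpen hU (m := 1) (by norm_num)).continuousOn_fderiv_of_isOpen hU le_rfl
  refine (isCompact_univ.eventually_forall_of_forall_eventually (x₀ := (0 : ℝ))
    (P := fun s a => z a + s • w a ∈ U ∧ fderiv ℝ (fderiv ℝ f) (z a + s • w a) (w a) (w a) <
      fderiv ℝ (fderiv ℝ f) (z a) (w a) (w a) + ε) fun a _ => ?_).mono
    fun s hs a => ⟨(hs a trivial).1, (hs a trivial).2.le⟩
  have hcurve_mem : ∀ᶠ q : ℝ × α in 𝓝 (0, a), z q.2 + q.1 • w q.2 ∈ U :=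
    hcurve.continuousAt.eventually_mem (hU.mem_nhds (by simpa using hzU a))
  refine hcurve_mem.and (ContinuousAt.eventually_lt ?_ ?_ (by simpa using hε))
  · have hat : ContinuousAt (fderiv ℝ (fderiv ℝ f)) (z a + (0 : ℝ) • w a) :=
      hD2.continuousAt (hU.mem_nhds (by simpa using hzU a))
    have hcomp := ContinuousAt.comp (f := fun q : ℝ × α => z q.2 + q.1 • w q.2) (x := (0, a)) hat
      hcurve.continuousAt
    exact (hcomp.clm_apply (by fun_prop)).clm_apply (by fun_prop)
  · have hcont : Continuous fun a => fderiv ℝ (fderiv ℝ f) (z a) :=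
      hD2.comp_continuous hz hzU
    exact Continuous.continuousAt (((hcont.clm_apply hw).clm_apply hw).comp continuous_snd
      |>.add continuous_const)

theorem eventually_forall_le_taylor_two (hU : IsOpen U) (hf : ContDiffOn ℝ 2 f U)
    (hz : Continuous z) (hw : Continuous w) (hzU : ∀ a, z a ∈ U) {ε : ℝ} (hε : 0 < ε) :
    ∀ᶠ t in 𝓝[>] (0 : ℝ), ∀ a, f (z a + t • w a) ≤ f (z a) + t * fderiv ℝ f (z a) (w a) +
      t ^ 2 * ((fderiv ℝ (fderiv ℝ f) (z a) (w a) (w a) + ε) / 2) := by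
  obtain ⟨δ, hδ, hD2⟩ :=
    Metric.eventually_nhds_iff_ball.1 (eventually_forall_fderiv_fderiv_le hU hf hz hw hzU hε)
  filter_upwards [Ioo_mem_nhdsGT hδ] with t ht a
  have hsmall : ∀ s ∈ Set.Icc 0 t, s ∈ ball (0 : ℝ) δ := fun s hs => by
    rw [mem_ball_zero_iff, norm_of_nonneg hs.1]
    exact hs.2.trans_lt ht.2
  have hline (s : ℝ) : HasDerivAt (fun s : ℝ => z a + s • w a) (w a) s := by
    simpa using ((hasDerivAt_id s).smul_const (w a)).const_add (z a)
  have hf' : ContDiffOn ℝ 1 (fderiv ℝ f) U := hf.fderiv_of_isOpen hU (by norm_num)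
  have hg : ∀ s ∈ Set.Icc 0 t, HasDerivAt (fun s => f (z a + s • w a))
      (fderiv ℝ f (z a + s • w a) (w a)) s := fun s hs =>
    HasFDerivAt.comp_hasDerivAt s ((hf.contDiffAt (hU.mem_nhds
      (hD2 s (hsmall s hs) a).1)).differentiableAt (by norm_num)).hasFDerivAt (hline s)
  have hg' : ∀ s ∈ Set.Icc 0 t, HasDerivAt (fun s => fderiv ℝ f (z a + s • w a) (w a))
      (fderiv ℝ (fderiv ℝ f) (z a + s • w a) (w a) (w a)) s := fun s hs => by
    have h := HasFDerivAt.comp_hasDerivAt s ((hf'.contDiffAt (hU.mem_nhds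
      (hD2 s (hsmall s hs) a).1)).differentiableAt (by norm_num)).hasFDerivAt (hline s)
    simpa using h.clm_apply (hasDerivAt_const s (w a))
  simpa using le_taylor_two_of_deriv_deriv_le ht.1.le hg hg' fun s hs => (hD2 s (hsmall s hs) a).2

end Taylor

/-! ### The infinitesimal Brunn–Minkowski inequality -/

section LocalBrunnMinkowski

theorem eventually_forall_one_add_mul_pos {α : Type*} [TopologicalSpace α] [CompactSpace α]
    {φ : α → ℝ} (hφ : Continuous φ) : ∀ᶠ t in 𝓝 (0 : ℝ), ∀ a, 0 < 1 + t * φ a := by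
  refine (isCompact_univ.eventually_forall_of_forall_eventually (x₀ := (0 : ℝ))
    (P := fun t a => 0 < 1 + t * φ a) fun a _ => ?_).mono fun t h a => h a trivial
  have hcont : Continuous fun q : ℝ × α => 1 + q.1 * φ q.2 := by fun_prop
  exact hcont.continuousAt.eventually_const_lt (by simp)

variable {n : ℕ} {K : Set (Eu n)}

namespace IsSmoothConvexBody

open scoped Gradient

theorem continuous_inner_gradient_sub (hK : IsSmoothConvexBody K) (v : Eu n) (c : ℝ) :
    Continuous fun x : Sph n => ⟪v, ∇ (sfn K) x⟫_ℝ - c := by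
  have := hK.continuous_gradient
  fun_prop

theorem continuous_secondVariation (hK : IsSmoothConvexBody K) (v : Eu n) (ε : ℝ) :
    Continuous fun x : Sph n => sfn K x * ⟪hessA K x v, v⟫_ℝ / 2 + ε / sfn K x := by
  have hsfn := hK.continuous_sfn
  have hhess := hK.continuous_hessA
  fun_prop (disch := exact fun x => (hK.pos x).ne')

theorem mul_inner_le_sfn_add (hK : IsSmoothConvexBody K) {p v w : Eu n} (hp : p ∈ K)
    {r a t D : ℝ} (hr0 : 0 ≤ r) (ht : 0 ≤ t) (hD : 0 ≤ D) (hvD : 0 ≤ ⟪v, p⟫_ℝ + D)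
    (hr : r ≤ a + t * (⟪v, p⟫_ℝ + D)) :
    r * ⟪w, p⟫_ℝ ≤ sfn K (a • w + (t * sfn K w) • v) + t * D * sfn K w := by
  have hh := hK.sfn_nonneg w
  rcases le_or_gt ⟪w, p⟫_ℝ 0 with hw | hw
  · exact (mul_nonpos_of_nonneg_of_nonpos hr0 hw).trans
      (add_nonneg (hK.sfn_nonneg _) (by positivity))
  · calc
      r * ⟪w, p⟫_ℝ ≤ (a + t * (⟪v, p⟫_ℝ + D)) * ⟪w, p⟫_ℝ := by gcongr
      _ = a * ⟪w, p⟫_ℝ + t * (⟪v, p⟫_ℝ + D) * ⟪w, p⟫_ℝ := by ring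
      _ ≤ a * ⟪w, p⟫_ℝ + t * (⟪v, p⟫_ℝ + D) * sfn K w := by
        gcongr
        exact inner_le_sfn hK.compact w hp
      _ = ⟪a • w + (t * sfn K w) • v, p⟫_ℝ + t * D * sfn K w := by
        rw [inner_add_left, real_inner_smul_left, real_inner_smul_left]
        ring
      _ ≤ _ := by
        gcongr
        exact inner_le_sfn hK.compact _ hp

theorem eventually_sfn_add_sfn_le (hK : IsSmoothConvexBody K) (v : Eu n) (C : ℝ) {ε : ℝ}
    (hε : 0 < ε) : ∀ᶠ t in 𝓝[>] (0 : ℝ), ∀ x : Sph n,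
      sfn K ((1 - t * C) • (x : Eu n) + (t * sfn K x) • v) +
          sfn K ((1 - t * C) • (x : Eu n) + (t * sfn K x) • -v) ≤
        2 * (1 - t * C) * sfn K x + t ^ 2 * (sfn K x ^ 2 * ⟪hessA K x v, v⟫_ℝ + ε) := by
  have htaylor (v : Eu n) := eventually_forall_le_taylor_two isOpen_compl_singleton
    hK.contDiffOn_sfn (z := fun x : Sph n => (x : Eu n))
    (w := fun x : Sph n => sfn K x • v - C • (x : Eu n)) (by fun_prop)
    ((hK.continuous_sfn.smul continuous_const).sub (by fun_prop)) ne_zero_of_mem_unit_sphere hε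
  filter_upwards [htaylor v, htaylor (-v)] with t hv hnv x
  have hx := ne_zero_of_mem_unit_sphere x
  have hcurve (v : Eu n) : (x : Eu n) + t • (sfn K x • v - C • (x : Eu n)) =
      (1 - t * C) • (x : Eu n) + (t * sfn K x) • v := by module
  have hfirst (v : Eu n) : fderiv ℝ (sfn K) x (sfn K x • v - C • (x : Eu n)) =
      sfn K x * fderiv ℝ (sfn K) x v - C * sfn K x := by
    rw [map_sub, map_smul, map_smul, ← inner_gradient_left (y := (x : Eu n)),
      hK.inner_gradient_self hx, smul_eq_mul, smul_eq_mul]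
  have hsecond (v : Eu n) : fderiv ℝ (fderiv ℝ (sfn K)) x (sfn K x • v - C • (x : Eu n))
      (sfn K x • v - C • (x : Eu n)) = sfn K x ^ 2 * ⟪hessA K x v, v⟫_ℝ := by
    have hxv : ⟪hessA K x v, x⟫_ℝ = 0 := by
      rw [hK.inner_hessA_comm hx, hK.hessA_apply_self hx, inner_zero_left]
    rw [← hK.inner_hessA_left hx, map_sub, map_smul, map_smul, hK.hessA_apply_self hx, smul_zero,
      sub_zero, real_inner_smul_left, inner_sub_right, inner_smul_right, inner_smul_right, hxv]
    ring
  have hv := hv x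
  have hnv := hnv x
  rw [hcurve, hfirst, hsecond] at hv hnv
  rw [map_neg] at hnv
  rw [map_neg, inner_neg_neg] at hnv
  linarith

-- Radial functions `1 ± t (⟪v, ∇h⟫ - c)` perturb `K` in opposite directions; by Taylor expansion of
-- `h`, midpoints of the two perturbed bodies lie in a perturbation of second order.
theorem eventually_midpoint_mem (hK : IsSmoothConvexBody K) (v : Eu n) (c : ℝ) {ε : ℝ}
    (hε : 0 < ε) : ∀ᶠ t in 𝓝[>] (0 : ℝ),
      ∀ y₁ ∈ coneMap K '' starRegion (fun x => 1 + t * (⟪v, ∇ (sfn K) x⟫_ℝ - c)),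
      ∀ y₂ ∈ coneMap K '' starRegion (fun x => 1 + -t * (⟪v, ∇ (sfn K) x⟫_ℝ - c)),
        midpoint ℝ y₁ y₂ ∈ insert 0 (coneMap K '' starRegion (fun x =>
          1 + t ^ 2 * (sfn K x * ⟪hessA K x v, v⟫_ℝ / 2 + ε / sfn K x))) := by
  obtain ⟨R, hR⟩ := hK.compact.isBounded.exists_norm_le
  obtain ⟨C, hC⟩ : ∃ C, ∀ x : Sph n, |⟪v, ∇ (sfn K) x⟫_ℝ| + |c| ≤ C := by
    refine ⟨‖v‖ * R + |c|, fun x => ?_⟩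
    gcongr
    exact (abs_real_inner_le_norm _ _).trans
      (by gcongr; exact hR _ (hK.gradient_mem (ne_zero_of_mem_unit_sphere x)))
  filter_upwards [hK.eventually_sfn_add_sfn_le v C hε, self_mem_nhdsWithin]
    with t htaylor (ht : 0 < t) y₁ hy₁ y₂ hy₂
  obtain ⟨x₁, r₁, hr₁, hr₁', rfl⟩ := mem_image_coneMap_starRegion.1 hy₁
  obtain ⟨x₂, r₂, hr₂, hr₂', rfl⟩ := mem_image_coneMap_starRegion.1 hy₂
  refine (eq_or_ne (midpoint ℝ _ _) 0).imp_right fun hne => ?_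
  obtain ⟨x, r, hr, hxr⟩ := hK.exists_smul_gradient_eq hne
  refine mem_image_coneMap_starRegion.2 ⟨x, r, hr, ?_, hxr⟩
  have hc := abs_le.1 (le_refl |c|)
  have hv₁ := abs_le.1 (le_sub_iff_add_le.2 (hC x₁))
  have hv₂ := abs_le.1 (le_sub_iff_add_le.2 (hC x₂))
  have hle₁ := hK.mul_inner_le_sfn_add (hK.gradient_mem (ne_zero_of_mem_unit_sphere x₁))
    (v := v) (w := x) (a := 1 - t * C) (D := C - c) hr₁.le ht.le (by linarith) (by linarith)
    (by linarith)
  have hle₂ := hK.mul_inner_le_sfn_add (hK.gradient_mem (ne_zero_of_mem_unit_sphere x₂))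
    (v := -v) (w := x) (a := 1 - t * C) (D := C + c) hr₂.le ht.le (by linarith)
    (by rw [inner_neg_left]; linarith) (by rw [inner_neg_left]; linarith)
  have hmid : r * sfn K x =
      (r₁ * ⟪(x : Eu n), ∇ (sfn K) x₁⟫_ℝ + r₂ * ⟪(x : Eu n), ∇ (sfn K) x₂⟫_ℝ) / 2 := by
    rw [← hK.inner_gradient_self (ne_zero_of_mem_unit_sphere x), real_inner_comm,
      ← inner_smul_right, hxr, midpoint_eq_smul_add, inner_smul_right, inner_add_right,
      inner_smul_right, inner_smul_right, invOf_eq_inv]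
    ring
  have hsecond : (1 + t ^ 2 * (sfn K x * ⟪hessA K x v, v⟫_ℝ / 2 + ε / sfn K x)) * sfn K x =
      sfn K x + t ^ 2 * (sfn K x ^ 2 * ⟪hessA K x v, v⟫_ℝ / 2 + ε) := by
    have := (hK.pos x).ne'
    field_simp
  refine lt_of_mul_lt_mul_right ?_ (hK.pos x).le
  linarith [htaylor x, mul_pos (pow_pos ht 2) hε]

theorem integral_pow_mul_integral_pow_le (hK : IsSmoothConvexBody K) {ρ₁ ρ₂ ρ : Sph n → ℝ}
    (hρ₁ : Continuous ρ₁) (hρ₂ : Continuous ρ₂) (hρ : Continuous ρ) (hpos₁ : ∀ x, 0 < ρ₁ x)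
    (hpos₂ : ∀ x, 0 < ρ₂ x) (hpos : ∀ x, 0 < ρ x)
    (hmid : ∀ y₁ ∈ coneMap K '' starRegion ρ₁, ∀ y₂ ∈ coneMap K '' starRegion ρ₂,
      midpoint ℝ y₁ y₂ ∈ insert 0 (coneMap K '' starRegion ρ)) :
    (∫ x, ρ₁ x ^ (n + 1) ∂coneMeasure K) * (∫ x, ρ₂ x ^ (n + 1) ∂coneMeasure K) ≤
      (∫ x, ρ x ^ (n + 1) ∂coneMeasure K) ^ 2 := by
  have hBM := (prekopaLeindler_volume (Eu n)).measure_mul_measure_le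
    (hK.measurableSet_image_coneMap_starRegion hρ₁.measurable)
    (hK.measurableSet_image_coneMap_starRegion hρ₂.measurable) hmid
  have hnonneg {ρ : Sph n → ℝ} (hpos : ∀ x, 0 < ρ x) :
      0 ≤ (∫ x, ρ x ^ (n + 1) ∂coneMeasure K) / (n + 1) :=
    div_nonneg (integral_nonneg fun x => pow_nonneg (hpos x).le _) (by positivity)
  rw [measure_congr (insert_ae_eq_self 0 _), hK.volume_image_coneMap_starRegion hρ₁ hpos₁,
    hK.volume_image_coneMap_starRegion hρ₂ hpos₂, hK.volume_image_coneMap_starRegion hρ hpos,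
    integral_div, integral_div, integral_div, ← ENNReal.ofReal_mul (hnonneg hpos₁),
    ← ENNReal.ofReal_pow (hnonneg hpos), ENNReal.ofReal_le_ofReal_iff (by positivity),
    div_mul_div_comm, div_pow, ← sq] at hBM
  exact (div_le_div_iff_of_pos_right (by positivity)).1 hBM

theorem eventually_integral_mul_integral_le (hK : IsSmoothConvexBody K) (v : Eu n) (c : ℝ) {ε : ℝ}
    (hε : 0 < ε) : ∀ᶠ t in 𝓝[>] (0 : ℝ),
      (∫ x : Sph n, (1 + t * (⟪v, ∇ (sfn K) x⟫_ℝ - c)) ^ (n + 1) ∂coneMeasure K) *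
          (∫ x : Sph n, (1 + -t * (⟪v, ∇ (sfn K) x⟫_ℝ - c)) ^ (n + 1) ∂coneMeasure K) ≤
        (∫ x : Sph n, (1 + t ^ 2 * (sfn K x * ⟪hessA K x v, v⟫_ℝ / 2 + ε / sfn K x)) ^ (n + 1)
          ∂coneMeasure K) ^ 2 := by
  have hφ := hK.continuous_inner_gradient_sub v c
  have hκ := hK.continuous_secondVariation v ε
  have hφpos := eventually_forall_one_add_mul_pos hφ
  have hneg : Filter.Tendsto (fun t : ℝ => -t) (𝓝 0) (𝓝 0) := by
    simpa using (continuous_neg (G := ℝ)).tendsto 0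
  have hsq : Filter.Tendsto (fun t : ℝ => t ^ 2) (𝓝 0) (𝓝 0) := by
    simpa using (continuous_pow (M := ℝ) 2).tendsto 0
  filter_upwards [hK.eventually_midpoint_mem v c hε, nhdsWithin_le_nhds hφpos,
    nhdsWithin_le_nhds (hneg.eventually hφpos),
    nhdsWithin_le_nhds (hsq.eventually (eventually_forall_one_add_mul_pos hκ))]
    with t hmid hpos₁ hpos₂ hpos
  exact hK.integral_pow_mul_integral_pow_le (by fun_prop) (by fun_prop) (by fun_prop)
    hpos₁ hpos₂ hpos hmid

theorem local_brunnMinkowski (hK : IsSmoothConvexBody K) (v : Eu n) {c : ℝ}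
    (hc : ∫ x : Sph n, (⟪v, ∇ (sfn K) x⟫_ℝ - c) ∂coneMeasure K = 0) :
    n * ∫ x : Sph n, (⟪v, ∇ (sfn K) x⟫_ℝ - c) ^ 2 ∂coneMeasure K ≤
      ∫ x : Sph n, sfn K x * ⟪hessA K x v, v⟫_ℝ ∂coneMeasure K := by
  have := hK.isFiniteMeasure_coneMeasure
  set V : ℝ := ∫ x : Sph n, (⟪v, ∇ (sfn K) x⟫_ℝ - c) ^ 2 ∂coneMeasure K
  set W : ℝ := ∫ x : Sph n, sfn K x * ⟪hessA K x v, v⟫_ℝ ∂coneMeasure K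
  set S : ℝ := ∫ x : Sph n, (sfn K x)⁻¹ ∂coneMeasure K
  have hle {ε : ℝ} (hε : 0 < ε) : n * V ≤ W + 2 * ε * S := by
    have hinv : Continuous fun x : Sph n => (sfn K x)⁻¹ :=
      hK.continuous_sfn.inv₀ fun x => (hK.pos x).ne'
    have hAv : Continuous fun x : Sph n => sfn K x * ⟪hessA K x v, v⟫_ℝ := by
      have hsfn := hK.continuous_sfn
      have hhess := hK.continuous_hessA
      fun_prop
    have hint : ∫ x : Sph n, (sfn K x * ⟪hessA K x v, v⟫_ℝ / 2 + ε / sfn K x) ∂coneMeasure K =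
        W / 2 + ε * S := by
      simp only [div_eq_mul_inv ε]
      rw [integral_add (integrable_of_continuous (by fun_prop))
        (integrable_of_continuous (by fun_prop)), integral_div, integral_const_mul]
    have h := choose_two_mul_integral_sq_le (hK.continuous_inner_gradient_sub v c)
      (hK.continuous_secondVariation v ε) hc (hK.eventually_integral_mul_integral_le v c hε)
    rw [hint, Nat.cast_choose_two, Nat.cast_succ, add_sub_cancel_right] at h
    have hn : (0 : ℝ) < n + 1 := by positivity
    exact le_of_mul_le_mul_left (by linarith) hn
  have hlim : Filter.Tendsto (fun ε : ℝ => W + 2 * ε * S) (𝓝[>] 0) (𝓝 W) := by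
    have hcont : Continuous fun ε : ℝ => W + 2 * ε * S := by fun_prop
    simpa using (hcont.tendsto 0).mono_left nhdsWithin_le_nhds
  exact ge_of_tendsto hlim (Filter.mem_of_superset self_mem_nhdsWithin fun ε hε => hle hε)

end IsSmoothConvexBody

end LocalBrunnMinkowski

/-! ### Rigidity -/

section Rigidity

open scoped Gradient

variable {n : ℕ} {K : Set (Eu n)} {z : Eu n}

theorem integral_sphMeas_fderiv_apply {u : Eu n → ℝ} (hu : ContDiffOn ℝ 1 u {0}ᶜ)
    (hom : ∀ r : ℝ, 0 < r → ∀ z, u (r • z) = r * u z) (v : Eu n) :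
    ∫ x : Sph n, fderiv ℝ u x v ∂sphMeas n =
      (n + 1) * ∫ x : Sph n, ⟪(x : Eu n), v⟫_ℝ * u x ∂sphMeas n := by
  simpa [sphMeas] using integral_sphere_fderiv_apply volume hu hom v

instance (n : ℕ) : (sphMeas n).IsOpenPosMeasure :=
  inferInstanceAs (volume : Measure (Eu n)).toSphere.IsOpenPosMeasure

theorem coneMeasure_of_dens_eq_one (hdens : ∀ x : Sph n, dens K x = 1) :
    coneMeasure K = sphMeas n := by
  simp only [coneMeasure, hdens, ENNReal.ofReal_one]
  exact withDensity_one

theorem tsfn_smul (K : Set (Eu n)) {r : ℝ} (hr : 0 ≤ r) (z : Eu n) :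
    tsfn K (r • z) = r * tsfn K z := by
  rw [tsfn, tsfn, sfn_smul K hr, real_inner_smul_left, mul_sub]

theorem integral_gradient_sub_cK (hdens : ∀ x : Sph n, dens K x = 1) :
    ∫ x : Sph n, (∇ (sfn K) x - cK K) ∂sphMeas n = 0 := by
  have hcK : cK K = ⨍ x : Sph n, ∇ (sfn K) x ∂sphMeas n := by
    simp [cK, hdens, average_eq]
  rw [hcK, integral_sub_average]

namespace IsSmoothConvexBody

theorem hasFDerivAt_tsfn (hK : IsSmoothConvexBody K) (hz : z ≠ 0) :
    HasFDerivAt (tsfn K) (innerSL ℝ (∇ (sfn K) z - cK K)) z := by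
  have hsfn := (hK.differentiableAt_sfn hz).hasFDerivAt
  refine (hsfn.sub ((innerSL ℝ (cK K)).hasFDerivAt.congr_of_eventuallyEq
    (.of_forall fun z => real_inner_comm _ _))).congr_fderiv ?_
  ext v
  simp

theorem contDiffOn_tsfn (hK : IsSmoothConvexBody K) : ContDiffOn ℝ 1 (tsfn K) {0}ᶜ :=
  (hK.contDiffOn_sfn.of_le one_le_two).sub (contDiffOn_id.inner ℝ contDiffOn_const)

theorem continuous_tsfn (hK : IsSmoothConvexBody K) : Continuous fun x : Sph n => tsfn K x :=
  hK.contDiffOn_tsfn.continuousOn.comp_continuous continuous_subtype_val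
    ne_zero_of_mem_unit_sphere

theorem inner_gradient_sub_cK (hK : IsSmoothConvexBody K) (hz : z ≠ 0) :
    ⟪z, ∇ (sfn K) z - cK K⟫_ℝ = tsfn K z := by
  rw [inner_sub_right, real_inner_comm, hK.inner_gradient_self hz, tsfn]

-- The divergence theorem for the homogeneous function `h ⟪v, ∇h - m⟫` in the direction `v`.
theorem integral_sfn_mul_inner_hessA (hK : IsSmoothConvexBody K) (m v : Eu n) :
    ∫ x : Sph n, sfn K x * ⟪hessA K x v, v⟫_ℝ ∂sphMeas n =
      (n + 1) * (∫ x : Sph n, ⟪(x : Eu n), v⟫_ℝ * (sfn K x * ⟪v, ∇ (sfn K) x - m⟫_ℝ) ∂sphMeas n) -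
        ∫ x : Sph n, ⟪∇ (sfn K) x, v⟫_ℝ * ⟪v, ∇ (sfn K) x - m⟫_ℝ ∂sphMeas n := by
  have hsfn := hK.continuous_sfn
  have hgrad := hK.continuous_gradient
  have hhess := hK.continuous_hessA
  have hinner : ContDiffOn ℝ 1 (fun z => ⟪v, ∇ (sfn K) z - m⟫_ℝ) {0}ᶜ :=
    contDiffOn_const.inner ℝ (hK.contDiffOn_gradient.sub contDiffOn_const)
  have hderiv (x : Sph n) : fderiv ℝ (fun z => sfn K z * ⟪v, ∇ (sfn K) z - m⟫_ℝ) x v =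
      sfn K x * ⟪hessA K x v, v⟫_ℝ + ⟪∇ (sfn K) x, v⟫_ℝ * ⟪v, ∇ (sfn K) x - m⟫_ℝ := by
    have hx := ne_zero_of_mem_unit_sphere x
    have h := (hK.differentiableAt_sfn hx).hasFDerivAt.mul
      ((hasFDerivAt_const v (x : Eu n)).inner ℝ ((hK.hasFDerivAt_gradient hx).sub_const m))
    refine (congrArg (· v) h.fderiv).trans ?_
    simp only [add_apply, smul_apply, ContinuousLinearMap.comp_apply,
      ContinuousLinearMap.prod_apply, zero_apply, fderivInnerCLM_apply, inner_zero_left, add_zero,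
      smul_eq_mul, real_inner_comm, inner_gradient_left, add_right_inj]
    ring
  have hdiv := integral_sphMeas_fderiv_apply ((hK.contDiffOn_sfn.of_le one_le_two).mul hinner)
    (fun r hr z => by
      simp only [sfn_smul K hr.le, gradient_sfn_smul K hr, mul_assoc]) v
  rw [← hdiv, eq_sub_iff_add_eq, ← integral_add (integrable_of_continuous (by fun_prop))
    (integrable_of_continuous (by fun_prop))]
  exact integral_congr_ae (.of_forall fun x => (hderiv x).symm)

theorem integral_inner_cK_mul_tsfn (hK : IsSmoothConvexBody K)
    (hdens : ∀ x : Sph n, dens K x = 1) :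
    ∫ x : Sph n, ⟪(x : Eu n), cK K⟫_ℝ * tsfn K x ∂sphMeas n = 0 := by
  have hgrad := hK.continuous_gradient
  have hdiv := integral_sphMeas_fderiv_apply hK.contDiffOn_tsfn
    (fun r hr z => tsfn_smul K hr.le z) (cK K)
  simp only [(hK.hasFDerivAt_tsfn (ne_zero_of_mem_unit_sphere _)).fderiv, innerSL_apply_apply,
    real_inner_comm (cK K) (_ - _)] at hdiv
  rw [integral_inner (integrable_of_continuous (by fun_prop)), integral_gradient_sub_cK hdens,
    inner_zero_right] at hdiv
  exact (mul_eq_zero.1 hdiv.symm).resolve_left (by positivity)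

-- The square is written as a product to fit `OrthonormalBasis.sum_inner_mul_inner`.
theorem mul_integral_inner_gradient_sub_cK_sq_le (hK : IsSmoothConvexBody K)
    (hdens : ∀ x : Sph n, dens K x = 1) (v : Eu n) :
    n * ∫ x : Sph n, ⟪∇ (sfn K) x - cK K, v⟫_ℝ * ⟪v, ∇ (sfn K) x - cK K⟫_ℝ ∂sphMeas n ≤
      (n + 1) * (∫ x : Sph n, sfn K x * (⟪(x : Eu n), v⟫_ℝ * ⟪v, ∇ (sfn K) x - cK K⟫_ℝ) ∂sphMeas n)
        - ∫ x : Sph n, ⟪∇ (sfn K) x, v⟫_ℝ * ⟪v, ∇ (sfn K) x - cK K⟫_ℝ ∂sphMeas n := by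
  have hgrad := hK.continuous_gradient
  have hmean : ∫ x : Sph n, (⟪v, ∇ (sfn K) x⟫_ℝ - ⟪v, cK K⟫_ℝ) ∂coneMeasure K = 0 := by
    simp only [← inner_sub_right]
    rw [coneMeasure_of_dens_eq_one hdens, integral_inner (integrable_of_continuous (by fun_prop)),
      integral_gradient_sub_cK hdens, inner_zero_right]
  have h := hK.local_brunnMinkowski v hmean
  rw [coneMeasure_of_dens_eq_one hdens, hK.integral_sfn_mul_inner_hessA (cK K)] at h
  simpa only [← inner_sub_right, sq, real_inner_comm v, mul_left_comm] using h

theorem integral_inner_gradient_sub_cK (hK : IsSmoothConvexBody K)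
    (hdens : ∀ x : Sph n, dens K x = 1) :
    ∫ x : Sph n, ⟪∇ (sfn K) x, ∇ (sfn K) x - cK K⟫_ℝ ∂sphMeas n =
      ∫ x : Sph n, ‖∇ (sfn K) x - cK K‖ ^ 2 ∂sphMeas n := by
  have hgrad := hK.continuous_gradient
  have hcK : ∫ x : Sph n, ⟪cK K, ∇ (sfn K) x - cK K⟫_ℝ ∂sphMeas n = 0 := by
    rw [integral_inner (integrable_of_continuous (by fun_prop)), integral_gradient_sub_cK hdens,
      inner_zero_right]
  rw [← sub_zero (∫ x : Sph n, ⟪∇ (sfn K) x, _⟫_ℝ ∂sphMeas n), ← hcK,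
    ← integral_sub (integrable_of_continuous (by fun_prop))
      (integrable_of_continuous (by fun_prop))]
  simp only [← inner_sub_left, real_inner_self_eq_norm_sq]

theorem integral_sfn_mul_tsfn (hK : IsSmoothConvexBody K) (hdens : ∀ x : Sph n, dens K x = 1) :
    ∫ x : Sph n, sfn K x * tsfn K x ∂sphMeas n = ∫ x : Sph n, tsfn K x ^ 2 ∂sphMeas n := by
  have hsfn := hK.continuous_sfn
  have htsfn := hK.continuous_tsfn
  rw [← sub_zero (∫ x : Sph n, sfn K x * tsfn K x ∂sphMeas n),
    ← hK.integral_inner_cK_mul_tsfn hdens,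
    ← integral_sub (integrable_of_continuous (by fun_prop))
      (integrable_of_continuous (by fun_prop))]
  simp only [← sub_mul, sq, tsfn]

-- Sum `mul_integral_inner_gradient_sub_cK_sq_le` over an orthonormal basis of vectors `v`.
theorem integral_norm_gradient_sub_cK_sq_le (hK : IsSmoothConvexBody K)
    (hdens : ∀ x : Sph n, dens K x = 1) :
    ∫ x : Sph n, ‖∇ (sfn K) x - cK K‖ ^ 2 ∂sphMeas n ≤ ∫ x : Sph n, tsfn K x ^ 2 ∂sphMeas n := by
  have hsfn := hK.continuous_sfn
  have hgrad := hK.continuous_gradient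
  let b := EuclideanSpace.basisFun (Fin (n + 1)) ℝ
  have hsum := Finset.sum_le_sum fun i (_ : i ∈ Finset.univ) =>
    hK.mul_integral_inner_gradient_sub_cK_sq_le hdens (b i)
  rw [Finset.sum_sub_distrib, ← Finset.mul_sum, ← Finset.mul_sum,
    ← integral_finsetSum _ fun i _ => integrable_of_continuous (by fun_prop),
    ← integral_finsetSum _ fun i _ => integrable_of_continuous (by fun_prop),
    ← integral_finsetSum _ fun i _ => integrable_of_continuous (by fun_prop)] at hsum
  simp only [← Finset.mul_sum, b.sum_inner_mul_inner, real_inner_self_eq_norm_sq,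
    hK.inner_gradient_sub_cK (ne_zero_of_mem_unit_sphere _)] at hsum
  rw [hK.integral_sfn_mul_tsfn hdens, hK.integral_inner_gradient_sub_cK hdens,
    le_sub_iff_add_le, ← add_one_mul] at hsum
  exact le_of_mul_le_mul_left hsum (by positivity)

theorem norm_gradient_sub_cK_sub_smul_sq (hK : IsSmoothConvexBody K) (x : Sph n) :
    ‖∇ (sfn K) x - cK K - tsfn K x • (x : Eu n)‖ ^ 2 =
      ‖∇ (sfn K) x - cK K‖ ^ 2 - tsfn K x ^ 2 := by
  rw [norm_sub_sq_real, real_inner_smul_right, real_inner_comm,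
    hK.inner_gradient_sub_cK (ne_zero_of_mem_unit_sphere x), norm_smul, norm_eq_of_mem_sphere,
    mul_one, norm_eq_abs, sq_abs]
  ring

theorem gradient_sub_cK_eq_tsfn_smul (hK : IsSmoothConvexBody K) (hdens : ∀ x : Sph n, dens K x = 1)
    (x : Sph n) : ∇ (sfn K) x - cK K = tsfn K x • (x : Eu n) := by
  have hgrad := hK.continuous_gradient
  have htsfn := hK.continuous_tsfn
  have hcont : Continuous fun x : Sph n =>
      ‖∇ (sfn K) x - cK K - tsfn K x • (x : Eu n)‖ ^ 2 := by fun_prop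
  have hint : ∫ x : Sph n, ‖∇ (sfn K) x - cK K - tsfn K x • (x : Eu n)‖ ^ 2 ∂sphMeas n = 0 := by
    refine le_antisymm ?_ (integral_nonneg fun x => sq_nonneg _)
    simp only [hK.norm_gradient_sub_cK_sub_smul_sq]
    rw [integral_sub (integrable_of_continuous (by fun_prop))
      (integrable_of_continuous (by fun_prop))]
    exact sub_nonpos.2 (hK.integral_norm_gradient_sub_cK_sq_le hdens)
  have hzero := (integral_eq_zero_iff_of_nonneg (fun x => sq_nonneg _)
    (integrable_of_continuous hcont)).1 hint
  have hx := congrFun ((hcont.ae_eq_iff_eq (sphMeas n) continuous_zero).1 hzero) x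
  exact sub_eq_zero.1 (norm_eq_zero.1 (pow_eq_zero_iff two_ne_zero |>.1 hx))

end IsSmoothConvexBody

end Rigidity

section Conclusion

open scoped Gradient

theorem det_smul_id_add_smulRight {E : Type*} [NormedAddCommGroup E] [NormedSpace ℝ E]
    [FiniteDimensional ℝ E] {c : ℝ} (hc : c ≠ 0) (f : E →L[ℝ] ℝ) (m : E) :
    (c • ContinuousLinearMap.id ℝ E + f.smulRight m).det =
      c ^ Module.finrank ℝ E * (1 + c⁻¹ * f m) := by
  have h : ((c • ContinuousLinearMap.id ℝ E + f.smulRight m : E →L[ℝ] E) : E →ₗ[ℝ] E) =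
      c • LinearMap.transvection (f : E →ₗ[ℝ] ℝ) (c⁻¹ • m) := by
    ext1 v
    simp [LinearMap.transvection.apply, smul_smul, mul_left_comm c, hc]
  rw [ContinuousLinearMap.det, h, LinearMap.det_smul, LinearMap.transvection.det]
  simp

variable {n : ℕ} {K : Set (Eu n)} {c : ℝ}

theorem tsfn_add_tsfn_neg (K : Set (Eu n)) (z : Eu n) :
    tsfn K z + tsfn K (-z) = sfn K z + sfn K (-z) := by
  simp only [tsfn, inner_neg_left]
  ring

theorem sfn_eq_norm_of_eq_one (h : ∀ x : Sph n, sfn K x = 1) (z : Eu n) : sfn K z = ‖z‖ := by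
  rcases eq_or_ne z 0 with rfl | hz
  · rw [sfn_zero, norm_zero]
  · have hx := h ⟨‖z‖⁻¹ • z, by simp [norm_smul, hz]⟩
    rwa [sfn_smul K (by positivity), inv_mul_eq_one₀ (norm_ne_zero_iff.2 hz), eq_comm] at hx

namespace IsSmoothConvexBody

theorem gradient_sub_cK_eq_div_smul (hK : IsSmoothConvexBody K) (hdens : ∀ x : Sph n, dens K x = 1)
    {z : Eu n} (hz : z ≠ 0) : ∇ (sfn K) z - cK K = (tsfn K z / ‖z‖ ^ 2) • z := by
  have hpos : 0 < ‖z‖⁻¹ := inv_pos.2 (norm_pos_iff.2 hz)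
  have h := hK.gradient_sub_cK_eq_tsfn_smul hdens ⟨‖z‖⁻¹ • z, by simp [norm_smul, hz]⟩
  rw [gradient_sfn_smul K hpos, tsfn_smul K hpos.le, smul_smul] at h
  rw [h]
  congr 1
  ring

theorem hasFDerivAt_tsfn_mul_inv_norm (hK : IsSmoothConvexBody K)
    (hdens : ∀ x : Sph n, dens K x = 1) {z : Eu n} (hz : z ≠ 0) :
    HasFDerivAt (fun z => tsfn K z * ‖z‖⁻¹) (0 : Eu n →L[ℝ] ℝ) z := by
  have hz' : ‖z‖ ≠ 0 := norm_ne_zero_iff.2 hz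
  have hinv := (hasDerivAt_inv hz').comp_hasFDerivAt z (hasFDerivAt_norm hz)
  refine ((hK.hasFDerivAt_tsfn hz).mul hinv).congr_fderiv ?_
  rw [hK.gradient_sub_cK_eq_div_smul hdens hz]
  ext v
  simp only [neg_smul, smul_neg, Function.comp_apply, map_smul, add_apply, neg_apply, smul_apply,
    coe_innerSL_apply, smul_eq_mul, zero_apply]
  field_simp
  ring

theorem exists_tsfn_eq_mul_norm (hn : 1 ≤ n) (hK : IsSmoothConvexBody K)
    (hdens : ∀ x : Sph n, dens K x = 1) : ∃ c : ℝ, ∀ z : Eu n, tsfn K z = c * ‖z‖ := by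
  have hrank : 1 < Module.rank ℝ (Eu n) := by
    rw [← Module.finrank_eq_rank, finrank_euclideanSpace, Fintype.card_fin]
    exact_mod_cast Nat.lt_add_of_pos_left hn
  obtain ⟨c, hc⟩ := isOpen_compl_singleton.exists_is_const_of_fderiv_eq_zero (𝕜 := ℝ)
    (isConnected_compl_singleton_of_one_lt_rank hrank (0 : Eu n)).isPreconnected
    (fun z hz => (hK.hasFDerivAt_tsfn_mul_inv_norm hdens hz).differentiableAt
      |>.differentiableWithinAt)
    (fun z hz => (hK.hasFDerivAt_tsfn_mul_inv_norm hdens hz).fderiv)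
  refine ⟨c, fun z => ?_⟩
  rcases eq_or_ne z 0 with rfl | hz
  · simp [tsfn, sfn_zero]
  · exact (mul_inv_eq_iff_eq_mul₀ (norm_ne_zero_iff.2 hz)).1 (hc z hz)

theorem tsfn_scale_pos (hK : IsSmoothConvexBody K) (hc : ∀ z : Eu n, tsfn K z = c * ‖z‖) :
    0 < c := by
  let x : Sph n := ⟨EuclideanSpace.single 0 1, by simp⟩
  have hpos := add_pos (hK.pos x) (hK.pos (-x))
  rw [coe_neg_sphere, ← tsfn_add_tsfn_neg, hc, hc, norm_neg, norm_eq_of_mem_sphere] at hpos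
  linarith

theorem coneMap_eq (hK : IsSmoothConvexBody K) (hdens : ∀ x : Sph n, dens K x = 1)
    (hc : ∀ z : Eu n, tsfn K z = c * ‖z‖) {z : Eu n} (hz : z ≠ 0) :
    coneMap K z = c • z + ‖z‖ • cK K := by
  rw [coneMap, ← sub_eq_iff_eq_add, ← smul_sub, hK.gradient_sub_cK_eq_div_smul hdens hz, hc,
    smul_smul]
  congr 1
  have := norm_ne_zero_iff.2 hz
  field_simp

theorem dens_eq_pow_mul_sfn (hK : IsSmoothConvexBody K) (hdens : ∀ x : Sph n, dens K x = 1)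
    (hc : ∀ z : Eu n, tsfn K z = c * ‖z‖) (x : Sph n) : dens K x = c ^ n * sfn K x := by
  have hx := ne_zero_of_mem_unit_sphere x
  have hcone : coneMap K =ᶠ[𝓝 (x : Eu n)] fun z => c • z + ‖z‖ • cK K := by
    filter_upwards [isOpen_compl_singleton.mem_nhds hx] with z hz
      using hK.coneMap_eq hdens hc hz
  have hfderiv : HasFDerivAt (fun z : Eu n => c • z + ‖z‖ • cK K)
      (c • ContinuousLinearMap.id ℝ (Eu n) + (innerSL ℝ (x : Eu n)).smulRight (cK K)) x := by
    refine (((hasFDerivAt_id (x : Eu n)).const_smul c).add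
      ((hasFDerivAt_norm hx).smul_const (cK K))).congr_fderiv ?_
    rw [norm_eq_of_mem_sphere, inv_one, one_smul]
  have hsfn : sfn K x = c + ⟪(x : Eu n), cK K⟫_ℝ := by
    rw [← sub_eq_iff_eq_add, ← tsfn, hc, norm_eq_of_mem_sphere, mul_one]
  have hc0 : c ≠ 0 := (hK.tsfn_scale_pos hc).ne'
  rw [← hK.det_fderiv_coneMap, hcone.fderiv_eq, hfderiv.fderiv, det_smul_id_add_smulRight hc0,
    finrank_euclideanSpace_fin, innerSL_apply_apply, hsfn, pow_succ, mul_assoc, mul_add, mul_one,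
    mul_inv_cancel_left₀ hc0]

theorem sfn_eq_norm (hn : 1 ≤ n) (hK : IsSmoothConvexBody K)
    (hdens : ∀ x : Sph n, dens K x = 1) (z : Eu n) : sfn K z = ‖z‖ := by
  obtain ⟨c, hc⟩ := hK.exists_tsfn_eq_mul_norm hn hdens
  have hpos := hK.tsfn_scale_pos hc
  have hpow (x : Sph n) : c ^ n * sfn K x = 1 := by
    rw [← hK.dens_eq_pow_mul_sfn hdens hc, hdens]
  have heven (x : Sph n) : sfn K x = sfn K (-x) :=
    mul_left_cancel₀ (pow_pos hpos n).ne' ((hpow x).trans (hpow (-x)).symm)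
  have hsfn (x : Sph n) : sfn K x = c := by
    have hsum := tsfn_add_tsfn_neg K x
    rw [hc, hc, norm_neg, norm_eq_of_mem_sphere, ← heven] at hsum
    linarith
  have hone : c = 1 := by
    have h := hpow ⟨EuclideanSpace.single 0 1, by simp⟩
    rw [hsfn, ← pow_succ] at h
    exact (pow_eq_one_iff_of_nonneg hpos.le n.succ_ne_zero).1 h
  exact sfn_eq_norm_of_eq_one (fun x => (hsfn x).trans hone) z

end IsSmoothConvexBody

theorem eq_closedBall_of_sfn_eq_norm (hK : IsCompact K) (hconv : Convex ℝ K) (hne : K.Nonempty)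
    (h : ∀ z : Eu n, sfn K z = ‖z‖) : K = closedBall 0 1 := by
  ext y
  rw [mem_iff_forall_inner_le_sfn hK hconv hne, mem_closedBall_zero_iff]
  simp only [h]
  refine ⟨fun hy => ?_, fun hy u => ?_⟩
  · by_contra! hlt
    have hyy := hy y
    rw [real_inner_self_eq_norm_mul_norm] at hyy
    exact hyy.not_gt (lt_mul_of_one_lt_left (zero_lt_one.trans hlt) hlt)
  · exact (real_inner_le_norm u y).trans (mul_le_of_le_one_right (norm_nonneg u) hy)

end Conclusion

/-- **Firey / Gage / Andrews / Choi–Daskalopoulos.** If the support function and Gauss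
curvature of a smooth, strictly convex body satisfy `𝒦 = h`, i.e.
`h(x)·det(A(x)+x⊗x) = 1` on `S^n`, then `K` is the closed unit ball. -/
theorem unit_ball_of_gauss_curvature_eq_support (n : ℕ) (hn : 1 ≤ n)
    (K : Set (Eu n)) (hK : IsSmoothConvexBody K)
    (heq : ∀ x : Sph n, sfn K (x : Eu n) * rK K (x : Eu n) = 1) :
    K = Metric.closedBall (0 : Eu n) 1 ∧ ∀ z : Eu n, sfn K z = ‖z‖ := by
  have hnorm : ∀ z : Eu n, sfn K z = ‖z‖ := hK.sfn_eq_norm hn heq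
  exact ⟨eq_closedBall_of_sfn_eq_norm hK.compact hK.convex hK.nonempty hnorm, hnorm⟩
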